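/- arXiv:1504.04250 — 6 statements merged into one kernel-verified Lean document; each statement's English description precedes it below -/
import Mathlib

section
/- Let Y be a real Banach space and let f : K_{ω,1} → Y be a bi-Lipschitz embedding. Then for every ε > 0 there exists i₀ ∈ ℕ such that ‖f(r) − f(t_{i₀})‖ ≤ 2·Lip(f)·(1 − β̄_Y(2/dist(f))) + ε. -/
open Set Function Filter

open scoped ENNReal

attribute [local instance] Classical.propDecidable

noncomputable section

def LipUB {α β : Type*} (dα : α → α → ℝ) (dβ : β → β → ℝ) (f : α → β) (L : ℝ) : Prop :=
  ∀ a b : α, dβ (f a) (f b) ≤ L * dα a b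

def CoLipUB {α β : Type*} (dα : α → α → ℝ) (dβ : β → β → ℝ) (f : α → β) (C : ℝ) : Prop :=
  ∀ a b : α, dα a b ≤ C * dβ (f a) (f b)

def IsBiLipEmb {α β : Type*} (dα : α → α → ℝ) (dβ : β → β → ℝ) (f : α → β) : Prop :=
  Function.Injective f ∧ ∃ L C : ℝ, LipUB dα dβ f L ∧ CoLipUB dα dβ f C

def distortionSet (α β : Type*) (dα : α → α → ℝ) (dβ : β → β → ℝ) : Set ℝ :=
  {D | ∃ f : α → β, Function.Injective f ∧ ∃ L C : ℝ,
    LipUB dα dβ f L ∧ CoLipUB dα dβ f C ∧ D = L * C}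

def cDist (α β : Type*) (dα : α → α → ℝ) (dβ : β → β → ℝ) : ℝ≥0∞ :=
  ⨅ D ∈ distortionSet α β dα dβ, ENNReal.ofReal D
def lipConst {α β : Type*} (dα : α → α → ℝ) (dβ : β → β → ℝ) (f : α → β) : ℝ :=
  sSup {r : ℝ | ∃ a b : α, dα a b ≠ 0 ∧ r = dβ (f a) (f b) / dα a b}

def colipConst {α β : Type*} (dα : α → α → ℝ) (dβ : β → β → ℝ) (f : α → β) : ℝ :=
  sSup {r : ℝ | ∃ a b : α, dβ (f a) (f b) ≠ 0 ∧ r = dα a b / dβ (f a) (f b)}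

def distortionOf {α β : Type*} (dα : α → α → ℝ) (dβ : β → β → ℝ) (f : α → β) : ℝ :=
  lipConst dα dβ f * colipConst dα dβ f
def rolewiczSet (Y : Type*) [SeminormedAddCommGroup Y] (t : ℝ) : Set ℝ :=
  {s | ∃ x : Y, ‖x‖ ≤ 1 ∧ ∃ y : ℕ → Y, (∀ i, ‖y i‖ ≤ 1) ∧
    (∀ n m : ℕ, n ≠ m → t ≤ ‖y n - y m‖) ∧ s = ⨅ i, ‖x - y i‖ / 2}

def rolewiczMod (Y : Type*) [SeminormedAddCommGroup Y] (t : ℝ) : ℝ :=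
  1 - sSup (rolewiczSet Y t)

def HasBeta (Y : Type*) [SeminormedAddCommGroup Y] : Prop :=
  ∀ t : ℝ, 0 < t → t ≤ 2 → 0 < rolewiczMod Y t

def HasBetaP (Y : Type*) [SeminormedAddCommGroup Y] (p γ : ℝ) : Prop :=
  ∀ t : ℝ, 0 < t → t ≤ 2 → (rolewiczSet Y t).Nonempty → γ * t ^ p ≤ rolewiczMod Y t
inductive Umbel : Type | r | b | t (i : ℕ)

def uDist : Umbel → Umbel → ℝ
  | Umbel.r, Umbel.r => 0
  | Umbel.b, Umbel.b => 0
  | Umbel.t i, Umbel.t j => if i = j then 0 else 2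
  | Umbel.r, Umbel.b => 1
  | Umbel.b, Umbel.r => 1
  | Umbel.r, Umbel.t _ => 2
  | Umbel.t _, Umbel.r => 2
  | Umbel.b, Umbel.t _ => 1
  | Umbel.t _, Umbel.b => 1

/-- Umbel pedicel bending lemma, Lemma 2.2:
for every bi-Lipschitz embedding `f` of the countably branching star `K_{ω,1}`
(in umbel configuration) into a Banach space `Y`, for every `ε > 0` there is `i₀`
with `‖f r - f t_{i₀}‖ ≤ 2 Lip(f) (1 - β̄_Y(2 / dist f)) + ε`. -/
theorem umbel_pedicel_bending
    (Y : Type*) [NormedAddCommGroup Y] [NormedSpace ℝ Y] [CompleteSpace Y]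
    (f : Umbel → Y)
    (hf : IsBiLipEmb uDist (fun a b : Y => dist a b) f) :
    ∀ ε : ℝ, 0 < ε → ∃ i₀ : ℕ,
      ‖f Umbel.r - f (Umbel.t i₀)‖ ≤
        2 * lipConst uDist (fun a b : Y => dist a b) f *
          (1 - rolewiczMod Y (2 / distortionOf uDist (fun a b : Y => dist a b) f)) + ε := by
  intro ε hε
  obtain ⟨hinj, L0, C0, hL0, hC0⟩ := hf
  set L := lipConst uDist (fun a b : Y => dist a b) f with hL
  set C := colipConst uDist (fun a b : Y => dist a b) f with hC
  have hD : distortionOf uDist (fun a b : Y => dist a b) f = L * C := rfl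
  rw [hD]
  have hnn : ∀ a b, 0 ≤ uDist a b := by
    intro a b
    cases a <;> cases b <;> simp only [uDist] <;> (try split_ifs) <;> norm_num
  have hLip : ∀ a b, uDist a b ≠ 0 → dist (f a) (f b) / uDist a b ≤ L := by
    intro a b hab
    refine le_csSup ⟨L0, ?_⟩ ⟨a, b, hab, rfl⟩
    rintro _ ⟨a, b, hab, rfl⟩
    have hp : 0 < uDist a b := lt_of_le_of_ne (hnn a b) (Ne.symm hab)
    rw [div_le_iff₀ hp]
    exact hL0 a b
  have hCo : ∀ a b, dist (f a) (f b) ≠ 0 → uDist a b / dist (f a) (f b) ≤ C := by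
    intro a b hab
    refine le_csSup ⟨C0, ?_⟩ ⟨a, b, hab, rfl⟩
    rintro _ ⟨a, b, hab, rfl⟩
    have hp : 0 < dist (f a) (f b) := lt_of_le_of_ne dist_nonneg (Ne.symm hab)
    show uDist a b / dist (f a) (f b) ≤ C0
    rw [div_le_iff₀ hp]
    exact hC0 a b
  have hr : ‖f Umbel.r - f Umbel.b‖ ≤ L := by
    have := hLip Umbel.r Umbel.b (by simp [uDist])
    simpa [uDist, dist_eq_norm] using this
  have ht : ∀ i, ‖f (Umbel.t i) - f Umbel.b‖ ≤ L := by
    intro i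
    have := hLip (Umbel.t i) Umbel.b (by simp [uDist])
    simpa [uDist, dist_eq_norm] using this
  have hLpos : 0 < L := by
    refine lt_of_lt_of_le ?_ hr
    rw [norm_pos_iff, sub_ne_zero]
    intro h
    exact Umbel.noConfusion (hinj h)
  have hsep : ∀ n m : ℕ, n ≠ m → 0 < C ∧ 2 / C ≤ ‖f (Umbel.t n) - f (Umbel.t m)‖ := by
    intro n m hnm
    have hp : 0 < dist (f (Umbel.t n)) (f (Umbel.t m)) := by
      rw [dist_pos]
      intro h
      exact hnm (Umbel.t.inj (hinj h))
    have h1 := hCo (Umbel.t n) (Umbel.t m) hp.ne'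
    have h2 : uDist (Umbel.t n) (Umbel.t m) = 2 := by simp [uDist, hnm]
    rw [h2] at h1
    have hCp : 0 < C := lt_of_lt_of_le (by positivity) h1
    refine ⟨hCp, ?_⟩
    rw [← dist_eq_norm, div_le_iff₀ hCp]
    rw [div_le_iff₀ hp] at h1
    linarith
  have hscale : ∀ u v w : Y, ‖L⁻¹ • (u - w) - L⁻¹ • (v - w)‖ = ‖u - v‖ / L := by
    intro u v w
    rw [← smul_sub, sub_sub_sub_cancel_right, norm_smul, norm_inv, Real.norm_of_nonneg hLpos.le]
    field_simp
  have hball : ∀ v : Y, ‖v‖ ≤ L → ‖L⁻¹ • v‖ ≤ 1 := by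
    intro v hv
    rw [norm_smul, norm_inv, Real.norm_of_nonneg hLpos.le, inv_mul_le_iff₀ hLpos]
    linarith
  have hbdd : BddAbove (rolewiczSet Y (2 / (L * C))) := by
    refine ⟨1, ?_⟩
    rintro _ ⟨x, hx, y, hy, -, rfl⟩
    have hb : BddBelow (Set.range fun i => ‖x - y i‖ / 2) :=
      ⟨0, by rintro _ ⟨i, rfl⟩; positivity⟩
    refine (ciInf_le hb 0).trans ?_
    have := norm_sub_le x (y 0)
    have := hy 0
    linarith
  have hmem : (⨅ i, ‖L⁻¹ • (f Umbel.r - f Umbel.b) - L⁻¹ • (f (Umbel.t i) - f Umbel.b)‖ / 2)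
      ∈ rolewiczSet Y (2 / (L * C)) := by
    refine ⟨_, hball _ hr, fun i => L⁻¹ • (f (Umbel.t i) - f Umbel.b),
      fun i => hball _ (ht i), ?_, rfl⟩
    intro n m hnm
    obtain ⟨hCp, h⟩ := hsep n m hnm
    rw [hscale, le_div_iff₀ hLpos]
    refine le_trans (le_of_eq ?_) h
    field_simp
  have hle := le_csSup hbdd hmem
  have hlt := lt_of_le_of_lt hle (lt_add_of_pos_right _ (show 0 < ε / (2 * L) by positivity))
  obtain ⟨i, hi⟩ := exists_lt_of_ciInf_lt hlt
  refine ⟨i, ?_⟩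
  rw [hscale] at hi
  have h3 : 1 - rolewiczMod Y (2 / (L * C)) = sSup (rolewiczSet Y (2 / (L * C))) := by
    unfold rolewiczMod
    ring
  rw [h3]
  have h4 := mul_lt_mul_of_pos_left hi (show 0 < 2 * L by positivity)
  have h5 : 2 * L * (‖f Umbel.r - f (Umbel.t i)‖ / L / 2) = ‖f Umbel.r - f (Umbel.t i)‖ := by
    field_simp
  have h6 : 2 * L * (ε / (2 * L)) = ε := by field_simp
  rw [h5, mul_add, h6] at h4
  exact h4.le

end
end

section
/- Let Y be a real Banach space with property (β), let k ≥ 1 be an integer, let D ≥ 1, and suppose there exists a bi-Lipschitz embedding of T^ω_{2^k} into Y with distortion at most D. Then c_Y(T^ω_{2^{k−1}}) ≤ D·(1 − β̄_Y(2/D)). -/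
open Set Function Filter

open scoped ENNReal

attribute [local instance] Classical.propDecidable

noncomputable section

def lcpLen : List ℕ → List ℕ → ℕ
  | a :: x, b :: y => if a = b then lcpLen x y + 1 else 0
  | _, _ => 0

def treeDist (x y : List ℕ) : ℝ :=
  (x.length : ℝ) + (y.length : ℝ) - 2 * (lcpLen x y : ℝ)

def TreeOmega (h : ℕ) : Type := {x : List ℕ // x.length ≤ h}

def tDist (h : ℕ) : TreeOmega h → TreeOmega h → ℝ := fun x y => treeDist x.1 y.1

theorem lcpLen_append (p a b : List ℕ) : lcpLen (p ++ a) (p ++ b) = p.length + lcpLen a b := by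
  induction p with
  | nil => simp
  | cons c p ih => simp [lcpLen, ih]; omega

theorem treeDist_append (p a b : List ℕ) : treeDist (p ++ a) (p ++ b) = treeDist a b := by
  simp [treeDist, lcpLen_append]; ring

/-- Doubling map on the tree, using the selector `i`. -/
def goTree (i : List ℕ → ℕ → ℕ) : List ℕ → List ℕ → List ℕ
  | _, [] => []
  | p, n :: x => n :: i p n :: goTree i (p ++ [n, i p n]) x

theorem goTree_length (i : List ℕ → ℕ → ℕ) (x : List ℕ) :
    ∀ p, (goTree i p x).length = 2 * x.length := by
  induction x with
  | nil => intro p; simp [goTree]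
  | cons n x ih => intro p; simp [goTree, ih]; omega

theorem goTree_lcp (i : List ℕ → ℕ → ℕ) (x : List ℕ) :
    ∀ p y, lcpLen (goTree i p x) (goTree i p y) = 2 * lcpLen x y := by
  induction x with
  | nil => intro p y; simp [goTree, lcpLen]
  | cons n x ih =>
    intro p y
    cases y with
    | nil => simp [goTree, lcpLen]
    | cons m y =>
      by_cases h : n = m
      · subst h
        simp [goTree, lcpLen, ih]; omega
      · simp [goTree, lcpLen, h]

theorem goTree_inj (i : List ℕ → ℕ → ℕ) (x : List ℕ) :
    ∀ p y, goTree i p x = goTree i p y → x = y := by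
  induction x with
  | nil => intro p y h; cases y <;> simp_all [goTree]
  | cons n x ih =>
    intro p y h
    cases y with
    | nil => simp [goTree] at h
    | cons m y =>
      simp only [goTree, List.cons.injEq] at h
      obtain ⟨rfl, -, h⟩ := h
      rw [ih _ _ h]

theorem goTree_dist (i : List ℕ → ℕ → ℕ) (x y : List ℕ) (p : List ℕ) :
    treeDist (goTree i p x) (goTree i p y) = 2 * treeDist x y := by
  simp [treeDist, goTree_length, goTree_lcp]; ring

theorem goTree_root {Y : Type*} [PseudoMetricSpace Y] (F : List ℕ → Y) (N : ℕ) (K : ℝ)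
    (i : List ℕ → ℕ → ℕ)
    (hi : ∀ p n, p.length + 2 ≤ N → dist (F p) (F (p ++ [n, i p n])) ≤ K) (x : List ℕ) :
    ∀ p, p.length + 2 * x.length ≤ N → dist (F p) (F (p ++ goTree i p x)) ≤ K * x.length := by
  induction x with
  | nil => intro p _; simp [goTree]
  | cons n x ih =>
    intro p hp
    simp only [List.length_cons] at hp
    have h1 := hi p n (by omega)
    have h2 := ih (p ++ [n, i p n]) (by simp; omega)
    have h3 := dist_triangle (F p) (F (p ++ [n, i p n]))
      (F (p ++ [n, i p n] ++ goTree i (p ++ [n, i p n]) x))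
    have e : p ++ goTree i p (n :: x) = p ++ [n, i p n] ++ goTree i (p ++ [n, i p n]) x := by
      simp [goTree]
    rw [e]
    push_cast [List.length_cons]
    linarith

theorem goTree_lip {Y : Type*} [PseudoMetricSpace Y] (F : List ℕ → Y) (N : ℕ) (K : ℝ)
    (i : List ℕ → ℕ → ℕ)
    (hi : ∀ p n, p.length + 2 ≤ N → dist (F p) (F (p ++ [n, i p n])) ≤ K) (x : List ℕ) :
    ∀ p y, p.length + 2 * x.length ≤ N → p.length + 2 * y.length ≤ N →
      dist (F (p ++ goTree i p x)) (F (p ++ goTree i p y)) ≤ K * treeDist x y := by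
  have key : ∀ x y p : List ℕ, p.length + 2 * x.length ≤ N → p.length + 2 * y.length ≤ N →
      lcpLen x y = 0 →
      dist (F (p ++ goTree i p x)) (F (p ++ goTree i p y)) ≤ K * treeDist x y := by
    intro x y p hx hy h0
    have h1 := goTree_root F N K i hi x p hx
    have h2 := goTree_root F N K i hi y p hy
    have h3 := dist_triangle_left (F (p ++ goTree i p x)) (F (p ++ goTree i p y)) (F p)
    simp only [treeDist, h0]
    push_cast
    linarith
  induction x with
  | nil => intro p y hx hy; exact key _ _ _ hx hy (by simp [lcpLen])
  | cons n x ih =>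
    intro p y hx hy
    cases y with
    | nil => exact key _ _ _ hx hy (by simp [lcpLen])
    | cons m y =>
      by_cases h : n = m
      · subst h
        simp only [List.length_cons] at hx hy
        have h2 := ih (p ++ [n, i p n]) y (by simp; omega) (by simp; omega)
        have e : ∀ z, p ++ goTree i p (n :: z)
            = p ++ [n, i p n] ++ goTree i (p ++ [n, i p n]) z := by
          intro z; simp [goTree]
        rw [e, e]
        have e2 : treeDist (n :: x) (n :: y) = treeDist x y := treeDist_append [n] x y
        rw [e2]; exact h2
      · exact key _ _ _ hx hy (by simp [lcpLen, h])

theorem rolewiczSet_bddAbove (Y : Type*) [SeminormedAddCommGroup Y] (t : ℝ) :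
    BddAbove (rolewiczSet Y t) := by
  refine ⟨1, ?_⟩
  rintro s ⟨x, hx, y, hy, -, rfl⟩
  refine (ciInf_le ⟨0, ?_⟩ 0).trans ?_
  · rintro _ ⟨j, rfl⟩; positivity
  · have := norm_sub_le x (y 0)
    have := hy 0
    linarith

theorem fork_select {Y : Type*} [NormedAddCommGroup Y] [NormedSpace ℝ Y]
    (L t s' : ℝ) (hL : 0 < L) (hs : sSup (rolewiczSet Y t) < s')
    (x m : Y) (y : ℕ → Y) (hx : dist x m ≤ L) (hy : ∀ i, dist (y i) m ≤ L)
    (hsep : ∀ i j, i ≠ j → L * t ≤ dist (y i) (y j)) :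
    0 ≤ sSup (rolewiczSet Y t) ∧ ∃ i, dist x (y i) ≤ 2 * L * s' := by
  have sc : ∀ a b : Y, ‖L⁻¹ • (a - m) - L⁻¹ • (b - m)‖ = L⁻¹ * dist a b := by
    intro a b
    rw [← smul_sub, norm_smul, sub_sub_sub_cancel_right, dist_eq_norm, Real.norm_of_nonneg]
    positivity
  have sc1 : ∀ a : Y, dist a m ≤ L → ‖L⁻¹ • (a - m)‖ ≤ 1 := by
    intro a ha
    have := sc a m
    simp only [sub_self, smul_zero, sub_zero] at this
    rw [this, inv_mul_le_iff₀ hL]; linarith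
  have hmem : (⨅ i, ‖L⁻¹ • (x - m) - L⁻¹ • (y i - m)‖ / 2) ∈ rolewiczSet Y t := by
    refine ⟨_, sc1 x hx, fun i => L⁻¹ • (y i - m), fun i => sc1 _ (hy i), ?_, rfl⟩
    intro a b hab
    rw [sc, le_inv_mul_iff₀ hL]
    exact hsep a b hab
  have hle := le_csSup (rolewiczSet_bddAbove Y t) hmem
  refine ⟨le_trans (Real.iInf_nonneg fun i => by positivity) hle, ?_⟩
  obtain ⟨i, hi⟩ := exists_lt_of_ciInf_lt (hle.trans_lt hs)
  refine ⟨i, ?_⟩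
  rw [sc] at hi
  have : L⁻¹ * dist x (y i) ≤ 2 * s' := by linarith
  rw [inv_mul_le_iff₀ hL] at this
  linarith

/-- Proposition 2.4: if a Banach space `Y` has property (β) and
`T^ω_{2^k}` embeds into `Y` with distortion at most `D`, then
`c_Y(T^ω_{2^{k-1}}) ≤ D (1 - β̄_Y(2/D))`. -/
theorem tree_self_improvement
    (Y : Type*) [NormedAddCommGroup Y] [NormedSpace ℝ Y] [CompleteSpace Y]
    (hY : HasBeta Y) (k : ℕ) (hk : 1 ≤ k) (D : ℝ) (hD : 1 ≤ D)
    (hemb : ∃ (f : TreeOmega (2 ^ k) → Y) (L C : ℝ), Function.Injective f ∧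
      LipUB (tDist (2 ^ k)) (fun a b : Y => dist a b) f L ∧
      CoLipUB (tDist (2 ^ k)) (fun a b : Y => dist a b) f C ∧ L * C ≤ D) :
    cDist (TreeOmega (2 ^ (k - 1))) Y (tDist (2 ^ (k - 1))) (fun a b : Y => dist a b) ≤
      ENNReal.ofReal (D * (1 - rolewiczMod Y (2 / D))) := by
  obtain ⟨f, L, C, hinj, hLip, hCo, hLC⟩ := hemb
  generalize hN : 2 ^ k = N at *
  have hNk : 2 * 2 ^ (k - 1) = N := by
    obtain ⟨j, rfl⟩ : ∃ j, k = j + 1 := ⟨k - 1, by omega⟩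
    rw [← hN]; simp [pow_succ, mul_comm]
  have hN2 : 2 ≤ N := by
    have : 1 ≤ 2 ^ (k - 1) := Nat.one_le_two_pow
    omega
  set F : List ℕ → Y := fun l => if h : l.length ≤ N then f ⟨l, h⟩ else 0 with hF
  have hFf : ∀ l (h : l.length ≤ N), F l = f ⟨l, h⟩ := fun l h => by simp [hF, h]
  have hFL : ∀ a b : List ℕ, a.length ≤ N → b.length ≤ N →
      dist (F a) (F b) ≤ L * treeDist a b := by
    intro a b ha hb
    rw [hFf a ha, hFf b hb]; exact hLip ⟨a, ha⟩ ⟨b, hb⟩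
  have hFC : ∀ a b : List ℕ, a.length ≤ N → b.length ≤ N →
      treeDist a b ≤ C * dist (F a) (F b) := by
    intro a b ha hb
    rw [hFf a ha, hFf b hb]; exact hCo ⟨a, ha⟩ ⟨b, hb⟩
  have d1 : ∀ n, treeDist [] [n] = 1 := by intro n; simp [treeDist, lcpLen]
  have hd0 : 0 < dist (F []) (F [0]) := by
    have h := hFC [] [0] (by simp) (by simp; omega)
    rw [d1] at h
    rcases (dist_nonneg (x := F []) (y := F [0])).lt_or_eq with h' | h'
    · exact h'
    · rw [← h'] at h; norm_num at h
  have hLpos : 0 < L := by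
    have h := hFL [] [0] (by simp) (by simp; omega)
    rw [d1] at h; linarith
  have hCpos : 0 < C := by
    have h := hFC [] [0] (by simp) (by simp; omega)
    rw [d1] at h
    by_contra hc
    have := mul_nonpos_of_nonpos_of_nonneg (not_lt.1 hc) hd0.le
    linarith
  have hDpos : 0 < D := by linarith
  have hsel : ∀ s', sSup (rolewiczSet Y (2 / D)) < s' → ∀ p n, p.length + 2 ≤ N →
      0 ≤ sSup (rolewiczSet Y (2 / D)) ∧ ∃ i, dist (F p) (F (p ++ [n, i])) ≤ 2 * L * s' := by
    intro s' hs p n hp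
    refine fork_select L (2 / D) s' hLpos hs (F p) (F (p ++ [n])) (fun i => F (p ++ [n, i]))
      ?_ ?_ ?_
    · have h := hFL p (p ++ [n]) (by omega) (by simp; omega)
      have e : treeDist p (p ++ [n]) = 1 := by
        have := treeDist_append p [] [n]
        rwa [List.append_nil, d1] at this
      rw [e] at h; linarith
    · intro i
      have h := hFL (p ++ [n, i]) (p ++ [n]) (by simp; omega) (by simp; omega)
      rw [treeDist_append] at h
      have e : treeDist [n, i] [n] = 1 := by norm_num [treeDist, lcpLen]
      rw [e] at h; linarith
    · intro i j hij
      have h := hFC (p ++ [n, i]) (p ++ [n, j]) (by simp; omega) (by simp; omega)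
      rw [treeDist_append] at h
      have e : treeDist [n, i] [n, j] = 2 := by norm_num [treeDist, lcpLen, hij]
      rw [e] at h
      show L * (2 / D) ≤ dist (F (p ++ [n, i])) (F (p ++ [n, j]))
      set δ := dist (F (p ++ [n, i])) (F (p ++ [n, j]))
      have hδ : 0 ≤ δ := dist_nonneg
      rw [← mul_div_assoc, div_le_iff₀ hDpos]
      calc L * 2 ≤ L * (C * δ) := by gcongr
        _ = (L * C) * δ := by ring
        _ ≤ D * δ := by gcongr
        _ = δ * D := by ring
  have hs0 : 0 ≤ sSup (rolewiczSet Y (2 / D)) :=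
    (hsel _ (lt_add_one _) [] 0 (by simpa using hN2)).1
  have hr : 1 - rolewiczMod Y (2 / D) = sSup (rolewiczSet Y (2 / D)) := by
    simp [rolewiczMod]
  rw [hr]
  set s := sSup (rolewiczSet Y (2 / D)) with hs
  apply ENNReal.le_of_forall_pos_le_add
  intro ε hε _
  have hεr : (0 : ℝ) < ε := by exact_mod_cast hε
  have hε' : 0 < (ε : ℝ) / D := by positivity
  set s' := s + (ε : ℝ) / D with hs'
  have hsel' := fun p n hp => (hsel s' (by linarith) p n hp).2
  choose! i hi using hsel'
  have hmem : (2 * L * s') * (C / 2) ∈ distortionSet (TreeOmega (2 ^ (k - 1))) Y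
      (tDist (2 ^ (k - 1))) (fun a b : Y => dist a b) := by
    have hlen : ∀ x : TreeOmega (2 ^ (k - 1)), (goTree i [] x.1).length ≤ N := by
      intro x
      have := x.2
      rw [goTree_length]; omega
    refine ⟨fun x => F (goTree i [] x.1), ?_, 2 * L * s', C / 2, ?_, ?_, rfl⟩
    · intro x y hxy
      simp only [hFf _ (hlen x), hFf _ (hlen y)] at hxy
      have h := congrArg Subtype.val (hinj hxy)
      exact Subtype.ext (goTree_inj i _ _ _ h)
    · intro x y
      have hx := x.2
      have hy := y.2
      have := goTree_lip F N (2 * L * s') i hi x.1 [] y.1 (by simp; omega) (by simp; omega)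
      simpa [tDist] using this
    · intro x y
      have h := hFC _ _ (hlen x) (hlen y)
      rw [goTree_dist] at h
      show treeDist x.1 y.1 ≤ C / 2 * dist (F (goTree i [] x.1)) (F (goTree i [] y.1))
      linarith
  calc cDist (TreeOmega (2 ^ (k - 1))) Y (tDist (2 ^ (k - 1))) (fun a b : Y => dist a b)
      ≤ ENNReal.ofReal ((2 * L * s') * (C / 2)) := iInf₂_le _ hmem
    _ ≤ ENNReal.ofReal (D * s + ε) := by
        apply ENNReal.ofReal_le_ofReal
        have hs'0 : 0 ≤ s' := by positivity
        calc (2 * L * s') * (C / 2) = (L * C) * s' := by ring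
          _ ≤ D * s' := by gcongr
          _ = D * s + ε := by rw [hs']; field_simp
    _ ≤ ENNReal.ofReal (D * s) + ENNReal.ofReal ε := ENNReal.ofReal_add_le
    _ = ENNReal.ofReal (D * s) + ε := by rw [ENNReal.ofReal_coe_nnreal]

end
end

section
/- Let Y be a real Banach space admitting an equivalent norm with property (β). Then sup_{h≥1} c_Y(T^ω_h) = ∞, i.e., for every M > 0 there exists h ∈ ℕ with c_Y(T^ω_h) > M. -/
open Set Function Filter

open scoped ENNReal

attribute [local instance] Classical.propDecidable

noncomputable section

def rolewiczSetN {Y : Type*} [AddCommGroup Y] (N : Y → ℝ) (t : ℝ) : Set ℝ :=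
  {s | ∃ x : Y, N x ≤ 1 ∧ ∃ y : ℕ → Y, (∀ i, N (y i) ≤ 1) ∧
    (∀ n m : ℕ, n ≠ m → t ≤ N (y n - y m)) ∧ s = ⨅ i, N (x - y i) / 2}

def rolewiczModN {Y : Type*} [AddCommGroup Y] (N : Y → ℝ) (t : ℝ) : ℝ :=
  1 - sSup (rolewiczSetN N t)

def IsEquivNorm (Y : Type*) [SeminormedAddCommGroup Y] [NormedSpace ℝ Y] (N : Y → ℝ) : Prop :=
  (∀ x y : Y, N (x + y) ≤ N x + N y) ∧ (∀ (c : ℝ) (x : Y), N (c • x) = |c| * N x) ∧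
  ∃ a b : ℝ, 0 < a ∧ a ≤ b ∧ ∀ y : Y, a * ‖y‖ ≤ N y ∧ N y ≤ b * ‖y‖

def AdmitsBetaNorm (Y : Type*) [SeminormedAddCommGroup Y] [NormedSpace ℝ Y] : Prop :=
  ∃ N : Y → ℝ, IsEquivNorm Y N ∧ ∀ t : ℝ, 0 < t → t ≤ 2 → 0 < rolewiczModN N t

def AdmitsBetaPNorm (Y : Type*) [SeminormedAddCommGroup Y] [NormedSpace ℝ Y] (p γ : ℝ) : Prop :=
  ∃ N : Y → ℝ, IsEquivNorm Y N ∧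
    ∀ t : ℝ, 0 < t → t ≤ 2 → (rolewiczSetN N t).Nonempty → γ * t ^ p ≤ rolewiczModN N t
theorem aux_lcp_append (z x y : List ℕ) : lcpLen (z ++ x) (z ++ y) = z.length + lcpLen x y := by
  induction z with
  | nil => simp
  | cons a z ih => simp [lcpLen, ih]; omega

theorem aux_lcp_nil_left (y : List ℕ) : lcpLen [] y = 0 := by cases y <;> rfl
theorem aux_lcp_nil_right (y : List ℕ) : lcpLen y [] = 0 := by cases y <;> rfl

/-- doubling map of the tree -/
def auxG (g : List ℕ → ℕ → ℕ) : List ℕ → List ℕ → List ℕ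
  | _, [] => []
  | z, n :: x => n :: g z n :: auxG g (z ++ [n, g z n]) x

theorem auxG_length (g : List ℕ → ℕ → ℕ) (x z : List ℕ) :
    (auxG g z x).length = 2 * x.length := by
  induction x generalizing z with
  | nil => rfl
  | cons n x ih => simp [auxG, ih]; omega

theorem auxG_lcp (g : List ℕ → ℕ → ℕ) (x y z : List ℕ) :
    lcpLen (auxG g z x) (auxG g z y) = 2 * lcpLen x y := by
  induction x generalizing z y with
  | nil => simp [auxG, aux_lcp_nil_left]
  | cons n x ih =>
    cases y with
    | nil => simp [auxG, aux_lcp_nil_right]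
    | cons m y =>
      by_cases h : n = m
      · subst h
        simp [auxG, lcpLen, ih]; omega
      · simp [auxG, lcpLen, h]

theorem auxG_snoc (g : List ℕ → ℕ → ℕ) (x z : List ℕ) (n : ℕ) :
    auxG g z (x ++ [n]) = auxG g z x ++ [n, g (z ++ auxG g z x) n] := by
  induction x generalizing z with
  | nil => simp [auxG]
  | cons m x ih => simp [auxG, ih]

/-- normalized embedding of the tree of height `h` with edge constant `L` -/
def AuxP {Y : Type*} [AddCommGroup Y] (N : Y → ℝ) (h : ℕ) (L : ℝ) : Prop :=
  ∃ f : List ℕ → Y,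
    (∀ x n, x.length < h → N (f (x ++ [n]) - f x) ≤ L) ∧
    ∀ x y, x.length ≤ h → y.length ≤ h → treeDist x y ≤ N (f x - f y)

theorem auxP_ge_one {Y : Type*} [AddCommGroup Y] {N : Y → ℝ} {h : ℕ} {L : ℝ} (hh : 1 ≤ h)
    (H : AuxP N h L) : 1 ≤ L := by
  obtain ⟨f, h1, h2⟩ := H
  have a := h1 [] 0 (by simp; omega)
  have b := h2 [0] [] (by simpa using hh) (by simp)
  simp [treeDist, aux_lcp_nil_right] at a b
  linarith

theorem auxP_half {Y : Type*} [NormedAddCommGroup Y] [NormedSpace ℝ Y] {N : Y → ℝ}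
    (hsm : ∀ (c : ℝ) (x : Y), N (c • x) = |c| * N x)
    (htri : ∀ x y : Y, N (x + y) ≤ N x + N y) (hnn : ∀ x, 0 ≤ N x)
    {t θ : ℝ} (hθ : 1 - rolewiczModN N t < θ) {h : ℕ} {L : ℝ} (hh : 1 ≤ h)
    (ht : t * L ≤ 2)
    (H : AuxP N (2 * h) L) : AuxP N h (θ * L) := by
  have hL : 1 ≤ L := auxP_ge_one (by omega) H
  have hL0 : 0 < L := by linarith
  have hneg : ∀ x y, N (x - y) = N (y - x) := fun x y => by
    have := hsm (-1) (x - y)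
    simpa using this.symm
  obtain ⟨f, h1, h2⟩ := H
  have key : ∀ (z : List ℕ) (n : ℕ), ∃ i : ℕ, z.length + 2 ≤ 2 * h →
      N (f (z ++ [n, i]) - f z) ≤ 2 * (θ * L) := by
    intro z n
    by_cases hz : z.length + 2 ≤ 2 * h
    swap
    · exact ⟨0, fun h' => absurd h' hz⟩
    have hLi : |L⁻¹| = L⁻¹ := abs_of_pos (inv_pos.mpr hL0)
    have hLL : L⁻¹ * L = 1 := inv_mul_cancel₀ hL0.ne'
    have hLp : 0 < L⁻¹ := inv_pos.mpr hL0
    set x : Y := L⁻¹ • (f z - f (z ++ [n])) with hx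
    set y : ℕ → Y := fun i => L⁻¹ • (f (z ++ [n, i]) - f (z ++ [n])) with hy
    have hx1 : N x ≤ 1 := by
      rw [hx, hsm, hLi, hneg, ← hLL]
      exact mul_le_mul_of_nonneg_left (h1 z n (by omega)) hLp.le
    have hy1 : ∀ i, N (y i) ≤ 1 := by
      intro i
      rw [hy]
      simp only
      rw [hsm, hLi, ← hLL]
      have := h1 (z ++ [n]) i (by simp; omega)
      simp only [List.append_assoc, List.cons_append, List.nil_append] at this
      exact mul_le_mul_of_nonneg_left this hLp.le
    have hsep : ∀ i j : ℕ, i ≠ j → t ≤ N (y i - y j) := by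
      intro i j hij
      have e : y i - y j = L⁻¹ • (f (z ++ [n, i]) - f (z ++ [n, j])) := by
        simp only [hy, ← smul_sub]; congr 1; abel
      rw [e, hsm, hLi]
      have := h2 (z ++ [n, i]) (z ++ [n, j]) (by simp; omega) (by simp; omega)
      have e2 : treeDist (z ++ [n, i]) (z ++ [n, j]) = 2 := by
        simp [treeDist, aux_lcp_append, lcpLen, hij]; ring
      rw [e2] at this
      rw [inv_mul_eq_div, le_div_iff₀ hL0]
      linarith
    have hmem : (⨅ i, N (x - y i) / 2) ∈ rolewiczSetN N t := ⟨x, hx1, y, hy1, hsep, rfl⟩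
    have hbdd : BddAbove (rolewiczSetN N t) := by
      refine ⟨1, ?_⟩
      rintro s ⟨x, hx, y, hy, -, rfl⟩
      refine (ciInf_le ⟨0, ?_⟩ 0).trans ?_
      · rintro _ ⟨i, rfl⟩
        have := hnn (x - y i)
        positivity
      · have h3 := htri x (-y 0)
        have h4 := hsm (-1) (y 0)
        simp at h4
        rw [h4, ← sub_eq_add_neg] at h3
        linarith [hy 0]
    have hlt : (⨅ i, N (x - y i) / 2) < θ := by
      refine (le_csSup hbdd hmem).trans_lt ?_
      unfold rolewiczModN at hθ
      linarith
    obtain ⟨i, hi⟩ := exists_lt_of_ciInf_lt hlt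
    refine ⟨i, fun _ => ?_⟩
    have e : x - y i = L⁻¹ • (f z - f (z ++ [n, i])) := by
      simp only [hx, hy, ← smul_sub]; congr 1; abel
    rw [e, hsm, hLi, hneg, inv_mul_eq_div, div_lt_iff₀ (by norm_num), div_lt_iff₀ hL0] at hi
    linarith
  choose g hg using key
  refine ⟨fun x => (2⁻¹ : ℝ) • f (auxG g [] x), ?_, ?_⟩
  · intro x n hx
    have := hg (auxG g [] x) n (by rw [auxG_length]; omega)
    rw [← smul_sub, hsm, auxG_snoc, List.nil_append, abs_of_pos (by norm_num)]
    linarith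
  · intro x y hx hy
    have := h2 (auxG g [] x) (auxG g [] y) (by rw [auxG_length]; omega)
      (by rw [auxG_length]; omega)
    rw [← smul_sub, hsm, abs_of_pos (by norm_num)]
    unfold treeDist at this ⊢
    rw [auxG_length, auxG_length, auxG_lcp] at this
    push_cast at this
    linarith

theorem auxP_iter {Y : Type*} [NormedAddCommGroup Y] [NormedSpace ℝ Y] {N : Y → ℝ}
    (hsm : ∀ (c : ℝ) (x : Y), N (c • x) = |c| * N x)
    (htri : ∀ x y : Y, N (x + y) ≤ N x + N y) (hnn : ∀ x, 0 ≤ N x)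
    {t θ : ℝ} (ht0 : 0 < t) (hθ : 1 - rolewiczModN N t < θ) (hθ1 : θ ≤ 1) (n : ℕ) :
    ∀ L : ℝ, t * L ≤ 2 → AuxP N (2 ^ n) L → AuxP N 1 (θ ^ n * L) := by
  induction n with
  | zero => intro L _ H; simpa using H
  | succ n ih =>
    intro L ht H
    have hL : 1 ≤ L := auxP_ge_one Nat.one_le_two_pow H
    rw [pow_succ, mul_comm] at H
    have H' := auxP_half hsm htri hnn hθ Nat.one_le_two_pow ht H
    rw [pow_succ, mul_assoc]
    refine ih _ (le_trans ?_ ht) H'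
    exact mul_le_mul_of_nonneg_left (mul_le_of_le_one_left (by linarith) hθ1) ht0.le

theorem auxP_of_emb {Y : Type*} [NormedAddCommGroup Y] [NormedSpace ℝ Y] {N : Y → ℝ}
    (hsm : ∀ (c : ℝ) (x : Y), N (c • x) = |c| * N x)
    {a b : ℝ} (ha : 0 < a) (hb : 0 < b) (hab : ∀ y : Y, a * ‖y‖ ≤ N y ∧ N y ≤ b * ‖y‖)
    {h : ℕ} (hh : 1 ≤ h) {f : TreeOmega h → Y} {L C : ℝ}
    (h1 : LipUB (tDist h) (fun a b : Y => dist a b) f L)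
    (h2 : CoLipUB (tDist h) (fun a b : Y => dist a b) f C) : AuxP N h (b / a * (L * C)) := by
  have hC : 0 < C := by
    have := h2 ⟨[0], by simpa using hh⟩ ⟨[], by simp⟩
    simp only [tDist, treeDist, aux_lcp_nil_right] at this
    by_contra hC
    have h3 := mul_nonpos_of_nonpos_of_nonneg (not_lt.mp hC)
      (dist_nonneg (x := f ⟨[0], by simpa using hh⟩) (y := f ⟨[], by simp⟩))
    simp at this
    linarith
  have hCa : 0 < C / a := by positivity
  refine ⟨fun x => (C / a) • (if hx : x.length ≤ h then f ⟨x, hx⟩ else 0), ?_, ?_⟩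
  · intro x n hx
    have hx1 : (x ++ [n]).length ≤ h := by simp; omega
    have := h1 ⟨x ++ [n], hx1⟩ ⟨x, hx.le⟩
    simp only [tDist] at this
    have e : treeDist (x ++ [n]) x = 1 := by
      have := aux_lcp_append x [n] []
      rw [List.append_nil, aux_lcp_nil_right] at this
      simp [treeDist, this]; ring
    rw [e, dist_eq_norm] at this
    beta_reduce
    rw [dif_pos hx1, dif_pos hx.le, ← smul_sub, hsm, abs_of_pos hCa]
    calc _ ≤ C / a * (b * (L * 1)) := by
          refine mul_le_mul_of_nonneg_left ((hab _).2.trans ?_) hCa.le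
          exact mul_le_mul_of_nonneg_left this hb.le
      _ = _ := by field_simp
  · intro x y hx hy
    have := h2 ⟨x, hx⟩ ⟨y, hy⟩
    simp only [tDist, dist_eq_norm] at this
    beta_reduce
    rw [dif_pos hx, dif_pos hy, ← smul_sub, hsm, abs_of_pos hCa]
    calc _ ≤ C / a * (a * ‖f ⟨x, hx⟩ - f ⟨y, hy⟩‖) := by
          refine this.trans (le_of_eq ?_); field_simp
      _ ≤ _ := mul_le_mul_of_nonneg_left (hab _).1 hCa.le

/-- Theorem 2.5, first part: if `Y` admits an equivalent norm with
property (β) then `sup_{h ≥ 1} c_Y(T^ω_h) = ∞`. -/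
theorem tree_distortion_unbounded
    (Y : Type*) [NormedAddCommGroup Y] [NormedSpace ℝ Y] [CompleteSpace Y]
    (hY : AdmitsBetaNorm Y) :
    ∀ M : ℝ, 0 < M → ∃ h : ℕ, 1 ≤ h ∧
      ENNReal.ofReal M < cDist (TreeOmega h) Y (tDist h) (fun a b : Y => dist a b) := by
  intro M hM
  obtain ⟨N, ⟨htri, hsm, a, b, ha, hab0, hab⟩, hβ⟩ := hY
  have hb : 0 < b := ha.trans_le hab0
  have hnn : ∀ x, 0 ≤ N x := fun x => le_trans (by positivity) (hab x).1
  set K : ℝ := max 1 (b / a * (M + 1)) with hK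
  have hK1 : 1 ≤ K := le_max_left _ _
  have hK0 : 0 < K := by linarith
  have ht0 : 0 < 2 / K := by positivity
  have hδ := hβ (2 / K) ht0 (div_le_self (by norm_num) hK1)
  obtain ⟨θ, hθ, hθ1⟩ : ∃ θ, max 0 (1 - rolewiczModN N (2 / K)) < θ ∧ θ < 1 :=
    exists_between (max_lt one_pos (by linarith))
  have hθ0 : 0 < θ := (le_max_left _ _).trans_lt hθ
  have hθ' := (le_max_right _ _).trans_lt hθ
  obtain ⟨n, hn⟩ := exists_pow_lt_of_lt_one (inv_pos.mpr hK0) hθ1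
  refine ⟨2 ^ n, Nat.one_le_two_pow, ?_⟩
  refine lt_of_lt_of_le ((ENNReal.ofReal_lt_ofReal_iff (by linarith)).mpr (lt_add_one M)) ?_
  unfold cDist
  refine le_iInf₂ ?_
  rintro D ⟨f, -, L, C, h1, h2, rfl⟩
  refine ENNReal.ofReal_le_ofReal ?_
  by_contra hlt
  push Not at hlt
  have H := auxP_of_emb hsm ha hb hab Nat.one_le_two_pow h1 h2
  have hle : b / a * (L * C) ≤ K :=
    (mul_le_mul_of_nonneg_left hlt.le (by positivity)).trans (le_max_right _ _)
  have H1 := auxP_iter hsm htri hnn ht0 hθ' hθ1.le n _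
    (by rw [div_mul_eq_mul_div, div_le_iff₀ hK0]; linarith) H
  have h3 := auxP_ge_one le_rfl H1
  have h4 : θ ^ n * (b / a * (L * C)) ≤ θ ^ n * K :=
    mul_le_mul_of_nonneg_left hle (by positivity)
  have h5 : θ ^ n * K < K⁻¹ * K := mul_lt_mul_of_pos_right hn hK0
  rw [inv_mul_cancel₀ hK0.ne'] at h5
  linarith

end
end

section
/- Let Y be a real Banach space and let f : P^ω_1 → Y be a bi-Lipschitz embedding. Then ‖f(r) − f(s)‖ ≤ 3·Lip(f)·(1 − (2/3)·β̄_Y(2/dist(f))). -/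
open Set Function Filter

open scoped ENNReal

attribute [local instance] Classical.propDecidable

noncomputable section

inductive P1V : Type | r | b | s | t (i : ℕ)

def p1Dist : P1V → P1V → ℝ
  | P1V.r, P1V.r => 0
  | P1V.b, P1V.b => 0
  | P1V.s, P1V.s => 0
  | P1V.t i, P1V.t j => if i = j then 0 else 2
  | P1V.r, P1V.b => 1
  | P1V.b, P1V.r => 1
  | P1V.r, P1V.s => 3
  | P1V.s, P1V.r => 3
  | P1V.r, P1V.t _ => 2
  | P1V.t _, P1V.r => 2
  | P1V.b, P1V.s => 2
  | P1V.s, P1V.b => 2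
  | P1V.b, P1V.t _ => 1
  | P1V.t _, P1V.b => 1
  | P1V.s, P1V.t _ => 1
  | P1V.t _, P1V.s => 1

/-- Parasol top bending lemma, Lemma 2.6: for every bi-Lipschitz
embedding `f` of the level-1 parasol graph `P^ω_1` into a Banach space `Y`,
`‖f r - f s‖ ≤ 3 Lip(f) (1 - (2/3) β̄_Y(2 / dist f))`. -/
theorem parasol_top_bending
    (Y : Type*) [NormedAddCommGroup Y] [NormedSpace ℝ Y] [CompleteSpace Y]
    (f : P1V → Y) (hf : IsBiLipEmb p1Dist (fun a b : Y => dist a b) f) :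
    ‖f P1V.r - f P1V.s‖ ≤
      3 * lipConst p1Dist (fun a b : Y => dist a b) f *
        (1 - (2 / 3) * rolewiczMod Y (2 / distortionOf p1Dist (fun a b : Y => dist a b) f)) := by
  obtain ⟨hinj, L0, C0, hL0, hC0⟩ := hf
  have hp : ∀ a b, 0 ≤ p1Dist a b := by
    intro a b
    cases a <;> cases b <;> simp only [p1Dist] <;> (try split_ifs) <;> norm_num
  have hLip : ∀ a b, p1Dist a b ≠ 0 →
      dist (f a) (f b) ≤ lipConst p1Dist (fun a b : Y => dist a b) f * p1Dist a b := by
    intro a b hab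
    have hpos : 0 < p1Dist a b := lt_of_le_of_ne (hp a b) (Ne.symm hab)
    rw [← div_le_iff₀ hpos]
    refine le_csSup ⟨L0, ?_⟩ ⟨a, b, hab, rfl⟩
    rintro _ ⟨c, d, hcd, rfl⟩
    have hpos' : 0 < p1Dist c d := lt_of_le_of_ne (hp c d) (Ne.symm hcd)
    rw [div_le_iff₀ hpos']
    exact hL0 c d
  have hCo : ∀ a b, a ≠ b →
      p1Dist a b ≤ colipConst p1Dist (fun a b : Y => dist a b) f * dist (f a) (f b) := by
    intro a b hab
    have hpos : 0 < dist (f a) (f b) := dist_pos.2 (fun h => hab (hinj h))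
    rw [← div_le_iff₀ hpos]
    refine le_csSup ⟨C0, ?_⟩ ⟨a, b, hpos.ne', rfl⟩
    rintro _ ⟨c, d, hcd, rfl⟩
    have hpos' : 0 < dist (f c) (f d) := lt_of_le_of_ne dist_nonneg (Ne.symm hcd)
    rw [div_le_iff₀ hpos']
    exact hC0 c d
  unfold distortionOf
  generalize lipConst p1Dist (fun a b : Y => dist a b) f = L at *
  generalize colipConst p1Dist (fun a b : Y => dist a b) f = C at *
  have hrb : dist (f P1V.r) (f P1V.b) ≤ L := by
    have := hLip P1V.r P1V.b (by simp [p1Dist])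
    simpa [p1Dist] using this
  have htb : ∀ i, dist (f (P1V.t i)) (f P1V.b) ≤ L := by
    intro i
    have := hLip (P1V.t i) P1V.b (by simp [p1Dist])
    simpa [p1Dist] using this
  have hts : ∀ i, dist (f (P1V.t i)) (f P1V.s) ≤ L := by
    intro i
    have := hLip (P1V.t i) P1V.s (by simp [p1Dist])
    simpa [p1Dist] using this
  have hL : 0 < L := lt_of_lt_of_le
    (dist_pos.2 (fun h => by have := hinj h; cases this)) hrb
  have hC : 0 < C := by
    have h1 := hCo P1V.r P1V.b (by simp)
    simp only [p1Dist] at h1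
    by_contra h
    have := mul_nonpos_of_nonpos_of_nonneg (not_lt.1 h)
      (dist_nonneg (x := f P1V.r) (y := f P1V.b))
    linarith
  have hnorm : ∀ u v : Y, ‖L⁻¹ • (u - v)‖ = dist u v / L := by
    intro u v
    rw [norm_smul, norm_inv, Real.norm_of_nonneg hL.le, dist_eq_norm]
    field_simp
  have hsub : ∀ u v w : Y, L⁻¹ • (u - w) - L⁻¹ • (v - w) = L⁻¹ • (u - v) := by
    intro u v w
    rw [← smul_sub, sub_sub_sub_cancel_right]
  have hinfb : ∀ z : ℕ → Y, BddBelow (Set.range fun i => ‖z i‖ / 2) := fun z =>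
    ⟨0, by rintro _ ⟨i, rfl⟩; positivity⟩
  have hbdd : BddAbove (rolewiczSet Y (2 / (L * C))) := by
    refine ⟨1, ?_⟩
    rintro _ ⟨x, hx, y, hy, -, rfl⟩
    refine (ciInf_le (hinfb fun i => x - y i) 0).trans ?_
    have := norm_sub_le x (y 0)
    have := hy 0
    linarith
  have hmem : (⨅ i, ‖L⁻¹ • (f P1V.r - f P1V.b) - L⁻¹ • (f (P1V.t i) - f P1V.b)‖ / 2)
      ∈ rolewiczSet Y (2 / (L * C)) := by
    refine ⟨_, ?_, fun i => L⁻¹ • (f (P1V.t i) - f P1V.b), ?_, ?_, rfl⟩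
    · rw [hnorm, div_le_one hL]; exact hrb
    · intro i
      rw [hnorm, div_le_one hL]; exact htb i
    · intro n m hnm
      simp only [hsub, hnorm]
      have h2 := hCo (P1V.t n) (P1V.t m) (by simpa using hnm)
      simp only [p1Dist, if_neg hnm] at h2
      rw [div_le_div_iff₀ (by positivity) hL]
      nlinarith
  have hle := le_csSup hbdd hmem
  have hge : (‖f P1V.r - f P1V.s‖ - L) / L / 2 ≤
      ⨅ i, ‖L⁻¹ • (f P1V.r - f P1V.b) - L⁻¹ • (f (P1V.t i) - f P1V.b)‖ / 2 := by
    refine le_ciInf fun i => ?_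
    rw [hsub, hnorm]
    have h1 := dist_triangle (f P1V.r) (f (P1V.t i)) (f P1V.s)
    have h2 := hts i
    rw [← dist_eq_norm]
    gcongr
    linarith
  have hfin := hge.trans hle
  unfold rolewiczMod
  rw [div_div, div_le_iff₀ (by positivity)] at hfin
  linarith

end
end

section
/- Let Y be a real Banach space admitting an equivalent norm with property (β). Then sup_{ℓ≥1} c_Y(P^ω_ℓ) = ∞. Moreover, if Y itself has property (β_p) with constant γ > 0 for some p ∈ (1,∞), then c_Y(P^ω_ℓ) ≥ 2·(2γ/3)^{1/p}·ℓ^{1/p} for every integer ℓ ≥ 1. -/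
open Set Function Filter

open scoped ENNReal

attribute [local instance] Classical.propDecidable

noncomputable section

def parasolBase : Σ (Vt : Type) (Et : Type), Et → Vt × Vt :=
  ⟨P1V, Unit ⊕ ℕ ⊕ ℕ, fun e =>
    match e with
    | Sum.inl _ => (P1V.r, P1V.b)
    | Sum.inr (Sum.inl i) => (P1V.b, P1V.t i)
    | Sum.inr (Sum.inr i) => (P1V.t i, P1V.s)⟩

def parasolStep (d : Σ (Vt : Type) (Et : Type), Et → Vt × Vt) :
    Σ (Vt : Type) (Et : Type), Et → Vt × Vt :=
  ⟨d.1 ⊕ d.2.1 × (Unit ⊕ ℕ), d.2.1 × (Unit ⊕ ℕ ⊕ ℕ), fun e =>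
    match e with
    | (e, Sum.inl _) => (Sum.inl (d.2.2 e).1, Sum.inr (e, Sum.inl ()))
    | (e, Sum.inr (Sum.inl i)) => (Sum.inr (e, Sum.inl ()), Sum.inr (e, Sum.inr i))
    | (e, Sum.inr (Sum.inr i)) => (Sum.inr (e, Sum.inr i), Sum.inl (d.2.2 e).2)⟩

def parasolData : ℕ → Σ (Vt : Type) (Et : Type), Et → Vt × Vt
  | 0 => parasolBase
  | (n+1) => parasolStep (parasolData n)

def PVert (n : ℕ) : Type := (parasolData n).1

def parasolGraph (n : ℕ) : SimpleGraph (PVert n) :=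
  SimpleGraph.fromRel (fun x y => ∃ e, (parasolData n).2.2 e = (x, y))

def pGDist (n : ℕ) : PVert n → PVert n → ℝ :=
  fun x y => ((parasolGraph n).dist x y : ℝ)

/-! ### Auxiliary material -/

abbrev PData := Σ (Vt : Type) (Et : Type), Et → Vt × Vt

def dGraph (d : PData) : SimpleGraph d.1 :=
  SimpleGraph.fromRel (fun x y => ∃ e, d.2.2 e = (x, y))

lemma dGraph_edge (d : PData) (e : d.2.1) :
    (d.2.2 e).1 = (d.2.2 e).2 ∨ (dGraph d).Adj (d.2.2 e).1 (d.2.2 e).2 := by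
  by_cases h : (d.2.2 e).1 = (d.2.2 e).2
  · exact Or.inl h
  · right
    rw [dGraph, SimpleGraph.fromRel_adj]
    exact ⟨h, Or.inl ⟨e, rfl⟩⟩

lemma dGraph_edge_reach (d : PData) (e : d.2.1) :
    (dGraph d).Reachable (d.2.2 e).1 (d.2.2 e).2 := by
  rcases dGraph_edge d e with h | h
  · rw [h]
  · exact h.reachable

lemma dGraph_edge_dist (d : PData) (e : d.2.1) :
    (dGraph d).dist (d.2.2 e).1 (d.2.2 e).2 ≤ 1 := by
  rcases dGraph_edge d e with h | h
  · rw [h]; simp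
  · exact (SimpleGraph.dist_eq_one_iff_adj.mpr h).le

lemma reach_of_edges {d : PData} {V : Type} (H : SimpleGraph V) (g : d.1 → V)
    (hg : ∀ e, H.Reachable (g (d.2.2 e).1) (g (d.2.2 e).2)) {u v : d.1}
    (huv : (dGraph d).Reachable u v) : H.Reachable (g u) (g v) := by
  obtain ⟨w⟩ := huv
  induction w with
  | nil => exact SimpleGraph.Reachable.refl _
  | cons h _ ih =>
    refine SimpleGraph.Reachable.trans ?_ ih
    rw [dGraph, SimpleGraph.fromRel_adj] at h
    obtain ⟨_, ⟨e, he⟩ | ⟨e, he⟩⟩ := h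
    · have := hg e; rw [he] at this; exact this
    · have := hg e; rw [he] at this; exact this.symm

lemma potential_le {d : PData} (φ : d.1 → ℤ)
    (hφ : ∀ e, |φ (d.2.2 e).1 - φ (d.2.2 e).2| ≤ 1) {u v : d.1}
    (huv : (dGraph d).Reachable u v) : φ v - φ u ≤ (dGraph d).dist u v := by
  obtain ⟨w, hw⟩ := huv.exists_walk_length_eq_dist
  rw [← hw]
  clear hw huv
  induction w with
  | nil => simp
  | cons h _ ih =>
    rw [dGraph, SimpleGraph.fromRel_adj] at h
    rw [SimpleGraph.Walk.length_cons]
    push_cast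
    obtain ⟨_, ⟨e, he⟩ | ⟨e, he⟩⟩ := h
    · have := abs_le.mp (hφ e); rw [he] at this; dsimp only at this; linarith [this.1, this.2]
    · have := abs_le.mp (hφ e); rw [he] at this; dsimp only at this; linarith [this.1, this.2]

/-- The three kinds of vertices and edges of a copy of `P_1` in a step. -/
def stepB (d : PData) (e : d.2.1) : (parasolStep d).1 := Sum.inr (e, Sum.inl ())
def stepT (d : PData) (e : d.2.1) (i : ℕ) : (parasolStep d).1 := Sum.inr (e, Sum.inr i)
def stepI (d : PData) (v : d.1) : (parasolStep d).1 := Sum.inl v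

lemma step_conn (d : PData) (hd : ∀ u v, (dGraph d).Reachable u v) :
    ∀ u v, (dGraph (parasolStep d)).Reachable u v := by
  have hb : ∀ e, (dGraph (parasolStep d)).Reachable (stepI d (d.2.2 e).1) (stepB d e) :=
    fun e => dGraph_edge_reach (parasolStep d) (e, Sum.inl ())
  have ht : ∀ e i, (dGraph (parasolStep d)).Reachable (stepB d e) (stepT d e i) :=
    fun e i => dGraph_edge_reach (parasolStep d) (e, Sum.inr (Sum.inl i))
  have hs : ∀ e i, (dGraph (parasolStep d)).Reachable (stepT d e i) (stepI d (d.2.2 e).2) :=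
    fun e i => dGraph_edge_reach (parasolStep d) (e, Sum.inr (Sum.inr i))
  have hI : ∀ u v, (dGraph (parasolStep d)).Reachable (stepI d u) (stepI d v) := fun u v =>
    reach_of_edges _ (stepI d) (fun e => ((hb e).trans (ht e 0)).trans (hs e 0)) (hd u v)
  have key : ∀ x, ∃ v, (dGraph (parasolStep d)).Reachable x (stepI d v) := by
    rintro (v | ⟨e, ⟨⟩ | i⟩)
    · exact ⟨v, SimpleGraph.Reachable.refl _⟩
    · exact ⟨_, (hb e).symm⟩
    · exact ⟨_, hs e i⟩
  intro u v
  obtain ⟨a, ha⟩ := key u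
  obtain ⟨c, hc⟩ := key v
  exact (ha.trans (hI a c)).trans hc.symm

lemma step_dist (d : PData) (hd : ∀ u v, (dGraph d).Reachable u v) (u v : d.1) :
    3 * (dGraph d).dist u v ≤ (dGraph (parasolStep d)).dist (stepI d u) (stepI d v) := by
  let ρ : d.1 → ℤ := fun x => ((dGraph d).dist u x : ℤ)
  have hconn : (dGraph d).Connected := by
    have : Nonempty d.1 := ⟨u⟩
    exact ⟨hd⟩
  have hρ : ∀ e, |ρ (d.2.2 e).1 - ρ (d.2.2 e).2| ≤ 1 := by
    intro e
    have h1 := hconn.dist_triangle (u := u) (v := (d.2.2 e).1) (w := (d.2.2 e).2)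
    have h2 := hconn.dist_triangle (u := u) (v := (d.2.2 e).2) (w := (d.2.2 e).1)
    have h3 := dGraph_edge_dist d e
    rw [SimpleGraph.dist_comm (u := (d.2.2 e).2)] at h2
    simp only [ρ]
    rw [abs_le]
    constructor <;> omega
  let φ : (parasolStep d).1 → ℤ := fun x => match x with
    | Sum.inl v => 3 * ρ v
    | Sum.inr (e, Sum.inl _) => 2 * ρ (d.2.2 e).1 + ρ (d.2.2 e).2
    | Sum.inr (e, Sum.inr _) => ρ (d.2.2 e).1 + 2 * ρ (d.2.2 e).2
  have hφ : ∀ e, |φ ((parasolStep d).2.2 e).1 - φ ((parasolStep d).2.2 e).2| ≤ 1 := by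
    rintro ⟨e, ⟨⟩ | i | i⟩
    · have := hρ e
      show |3 * ρ (d.2.2 e).1 - (2 * ρ (d.2.2 e).1 + ρ (d.2.2 e).2)| ≤ 1
      convert this using 2; ring
    · have := hρ e
      show |2 * ρ (d.2.2 e).1 + ρ (d.2.2 e).2 - (ρ (d.2.2 e).1 + 2 * ρ (d.2.2 e).2)| ≤ 1
      convert this using 2; ring
    · have := hρ e
      show |ρ (d.2.2 e).1 + 2 * ρ (d.2.2 e).2 - 3 * ρ (d.2.2 e).2| ≤ 1
      convert this using 2; ring
  have := potential_le φ hφ (step_conn d hd (stepI d u) (stepI d v))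
  have h1 : φ (stepI d u) = 0 := by
    show 3 * ρ u = 0
    simp [ρ]
  have h2 : φ (stepI d v) = 3 * ((dGraph d).dist u v : ℤ) := rfl
  rw [h1, h2] at this
  omega

lemma two_le_dist {V : Type} (G : SimpleGraph V) {u v : V} (h : G.Reachable u v) (hne : u ≠ v)
    (hadj : ¬ G.Adj u v) : 2 ≤ G.dist u v := by
  have h0 : G.dist u v ≠ 0 := fun h0 => hne (h.dist_eq_zero_iff.mp h0)
  have h1 : G.dist u v ≠ 1 := fun h1 => hadj (SimpleGraph.dist_eq_one_iff_adj.mp h1)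
  omega

lemma step_tt (d : PData) (hd : ∀ u v, (dGraph d).Reachable u v) (e : d.2.1) (i j : ℕ)
    (hij : i ≠ j) : 2 ≤ (dGraph (parasolStep d)).dist (stepT d e i) (stepT d e j) := by
  apply two_le_dist _ (step_conn d hd _ _)
  · intro h
    simp only [stepT] at h
    have h1 := Sum.inr.inj h
    have h2 := Sum.inr.inj (Prod.mk.inj h1).2
    exact hij h2
  · intro h
    rw [dGraph, SimpleGraph.fromRel_adj] at h
    have key : ∀ i j, ¬ ∃ e', (parasolStep d).2.2 e' = (stepT d e i, stepT d e j) := by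
      rintro i j ⟨⟨e', ⟨⟩ | k | k⟩, h⟩ <;> simp [parasolStep, stepT] at h
    rcases h.2 with h | h
    · exact key _ _ h
    · exact key _ _ h

lemma base_conn : ∀ u v, (dGraph parasolBase).Reachable u v := by
  have hb : (dGraph parasolBase).Reachable P1V.r P1V.b :=
    dGraph_edge_reach parasolBase (Sum.inl ())
  have ht : ∀ i, (dGraph parasolBase).Reachable P1V.b (P1V.t i) :=
    fun i => dGraph_edge_reach parasolBase (Sum.inr (Sum.inl i))
  have hs : ∀ i, (dGraph parasolBase).Reachable (P1V.t i) P1V.s :=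
    fun i => dGraph_edge_reach parasolBase (Sum.inr (Sum.inr i))
  have key : ∀ x : P1V, (dGraph parasolBase).Reachable x P1V.b := by
    rintro (_ | _ | _ | i)
    · exact hb
    · exact SimpleGraph.Reachable.refl _
    · exact ((ht 0).trans (hs 0)).symm
    · exact (ht i).symm
  intro u v
  exact (key u).trans (key v).symm

lemma base_tt (i j : ℕ) (hij : i ≠ j) :
    2 ≤ (dGraph parasolBase).dist (P1V.t i) (P1V.t j) := by
  apply two_le_dist _ (base_conn _ _)
  · intro h
    exact hij (P1V.t.inj h)
  · intro h
    replace h := (SimpleGraph.fromRel_adj _ _ _).mp h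
    have key : ∀ i j, ¬ ∃ e', parasolBase.2.2 e' = (P1V.t i, P1V.t j) := by
      rintro i j ⟨⟨⟩ | k | k, h⟩ <;> simp [parasolBase] at h
    rcases h.2 with h | h
    · exact key _ _ h
    · exact key _ _ h

lemma data_conn (n : ℕ) : ∀ u v, (dGraph (parasolData n)).Reachable u v := by
  induction n with
  | zero => exact base_conn
  | succ n ih => exact step_conn _ ih

lemma data_ne (n : ℕ) : Nonempty (parasolData n).2.1 := by
  induction n with
  | zero => exact ⟨(Sum.inl () : Unit ⊕ ℕ ⊕ ℕ)⟩
  | succ n ih =>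
    obtain ⟨e⟩ := ih
    exact ⟨((e, Sum.inl ()) : (parasolData n).2.1 × (Unit ⊕ ℕ ⊕ ℕ))⟩

section analytic

variable {Y : Type*} [NormedAddCommGroup Y] [NormedSpace ℝ Y]

structure IsN (N : Y → ℝ) : Prop where
  tri : ∀ x y : Y, N (x + y) ≤ N x + N y
  hom : ∀ (c : ℝ) (x : Y), N (c • x) = |c| * N x
  nn : ∀ x, 0 ≤ N x

lemma IsN.sub_comm {N : Y → ℝ} (h : IsN N) (x y : Y) : N (x - y) = N (y - x) := by
  have := h.hom (-1) (x - y)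
  simp at this
  exact this.symm

lemma IsN.sub_tri {N : Y → ℝ} (h : IsN N) (x y z : Y) : N (x - z) ≤ N (x - y) + N (y - z) := by
  have := h.tri (x - y) (y - z)
  simpa using this

lemma rolewicz_le_one {N : Y → ℝ} (h : IsN N) {t s : ℝ} (hs : s ∈ rolewiczSetN N t) : s ≤ 1 := by
  obtain ⟨x, hx, y, hy, _, rfl⟩ := hs
  have hbdd : BddBelow (Set.range fun i => N (x - y i) / 2) :=
    ⟨0, by rintro _ ⟨i, rfl⟩; have := h.nn (x - y i); dsimp only; positivity⟩
  refine (ciInf_le hbdd 0).trans ?_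
  have := h.sub_tri x 0 (y 0)
  rw [h.sub_comm 0] at this
  simp only [sub_zero] at this
  linarith [hy 0]

lemma rolewiczModN_le_one {N : Y → ℝ} (h : IsN N) (t : ℝ) : rolewiczModN N t ≤ 1 := by
  have : 0 ≤ sSup (rolewiczSetN N t) := by
    apply Real.sSup_nonneg
    rintro s ⟨x, hx, y, hy, _, rfl⟩
    apply Real.iInf_nonneg
    intro i
    have := h.nn (x - y i); positivity
  rw [rolewiczModN]; linarith

lemma fork_pos {N : Y → ℝ} (h : IsN N) {L C : ℝ} {b : Y} {T : ℕ → Y}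
    (hT : ∀ i, N (b - T i) ≤ L) (hsep : ∀ i j, i ≠ j → 2 ≤ C * N (T i - T j)) :
    0 < C ∧ 0 < L ∧ 1 ≤ C * L := by
  have h1 := hsep 0 1 (by norm_num)
  have h2 := h.sub_tri (T 0) b (T 1)
  rw [h.sub_comm (T 0) b] at h2
  have h3 := h.nn (T 0 - T 1)
  have hN : N (T 0 - T 1) ≤ 2 * L := by linarith [hT 0, hT 1]
  have hC : 0 < C := by
    by_contra hC
    push Not at hC
    nlinarith
  refine ⟨hC, ?_, ?_⟩
  · by_contra hL
    push Not at hL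
    nlinarith
  · nlinarith

lemma fork {N : Y → ℝ} (h : IsN N) {L C t c : ℝ} {r b s : Y} {T : ℕ → Y}
    (hr : N (r - b) ≤ L) (hT : ∀ i, N (b - T i) ≤ L) (hs : ∀ i, N (T i - s) ≤ L)
    (hsep : ∀ i j, i ≠ j → 2 ≤ C * N (T i - T j)) (htL : t * (C * L) ≤ 2)
    (hc : t ≤ 2 → (rolewiczSetN N t).Nonempty → c ≤ rolewiczModN N t) :
    N (r - s) ≤ 3 * (L * (1 - 2 / 3 * c)) := by
  obtain ⟨hC, hL, hCL⟩ := fork_pos h hT hsep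
  have ht2 : t ≤ 2 := by
    by_contra ht
    push Not at ht
    nlinarith
  have hLi : |L⁻¹| = L⁻¹ := abs_of_pos (inv_pos.mpr hL)
  let x : Y := L⁻¹ • (r - b)
  let y : ℕ → Y := fun i => L⁻¹ • (T i - b)
  have hxy : ∀ i, N (x - y i) = L⁻¹ * N (r - T i) := by
    intro i
    simp only [x, y]
    rw [← smul_sub, h.hom, hLi]
    congr 2; abel
  have hmem : (⨅ i, N (x - y i) / 2) ∈ rolewiczSetN N t := by
    refine ⟨x, ?_, y, ?_, ?_, rfl⟩
    · simp only [x]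
      rw [h.hom, hLi, inv_mul_le_iff₀ hL]; linarith
    · intro i
      simp only [y]
      rw [h.hom, hLi, inv_mul_le_iff₀ hL, h.sub_comm]; linarith [hT i]
    · intro n m hnm
      simp only [y]
      rw [← smul_sub, h.hom, hLi, le_inv_mul_iff₀ hL]
      have h1 := hsep n m hnm
      have h2 : T n - b - (T m - b) = T n - T m := by abel
      rw [h2]
      have : C * (L * t) ≤ C * N (T n - T m) := by linarith
      exact le_of_mul_le_mul_left this hC
  have hle : (N (r - s) - L) / (2 * L) ≤ ⨅ i, N (x - y i) / 2 := by
    apply le_ciInf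
    intro i
    rw [hxy, div_le_iff₀ (by positivity)]
    have := h.sub_tri r (T i) s
    have h3 : L⁻¹ * N (r - T i) / 2 * (2 * L) = N (r - T i) := by field_simp
    rw [h3]; linarith [hs i]
  have hsup : (⨅ i, N (x - y i) / 2) ≤ sSup (rolewiczSetN N t) :=
    le_csSup ⟨1, fun _ hs => rolewicz_le_one h hs⟩ hmem
  have hcc := hc ht2 ⟨_, hmem⟩
  rw [rolewiczModN] at hcc
  have hfin : (N (r - s) - L) / (2 * L) ≤ 1 - c := by linarith
  rw [div_le_iff₀ (by positivity)] at hfin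
  linarith

def Good (N : Y → ℝ) (d : PData) (L C : ℝ) : Prop :=
  ∃ f : d.1 → Y, (∀ e, N (f (d.2.2 e).1 - f (d.2.2 e).2) ≤ L) ∧
    ∀ u v, ((dGraph d).dist u v : ℝ) ≤ C * N (f u - f v)

lemma good_step {N : Y → ℝ} (h : IsN N) (d : PData) (hd : ∀ u v, (dGraph d).Reachable u v)
    {L C t c : ℝ} (htL : t * (C * L) ≤ 2)
    (hc : t ≤ 2 → (rolewiczSetN N t).Nonempty → c ≤ rolewiczModN N t)
    (hg : Good N (parasolStep d) L C) : Good N d (L * (1 - 2 / 3 * c)) C := by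
  obtain ⟨f, hf, hC⟩ := hg
  have hsc : ∀ a b : Y, N ((3 : ℝ)⁻¹ • a - (3 : ℝ)⁻¹ • b) = N (a - b) / 3 := by
    intro a b
    rw [← smul_sub, h.hom, abs_of_pos (by norm_num)]; ring
  refine ⟨fun v => (3 : ℝ)⁻¹ • f (stepI d v), ?_, ?_⟩
  · intro e
    rw [hsc]
    have := fork (t := t) (c := c) (C := C) (L := L) h (r := f (stepI d (d.2.2 e).1))
      (b := f (stepB d e))
      (s := f (stepI d (d.2.2 e).2)) (T := fun i => f (stepT d e i))
      (hf (e, Sum.inl ())) (fun i => hf (e, Sum.inr (Sum.inl i)))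
      (fun i => hf (e, Sum.inr (Sum.inr i)))
      (fun i j hij => le_trans (by exact_mod_cast step_tt d hd e i j hij) (hC _ _)) htL hc
    linarith
  · intro u v
    rw [hsc]
    have h1 := hC (stepI d u) (stepI d v)
    have h2 : (3 : ℝ) * (dGraph d).dist u v
        ≤ (dGraph (parasolStep d)).dist (stepI d u) (stepI d v) := by
      exact_mod_cast step_dist d hd u v
    linarith

lemma good_base {N : Y → ℝ} (h : IsN N) 
    {L C t c : ℝ} (htL : t * (C * L) ≤ 2)
    (hc : t ≤ 2 → (rolewiczSetN N t).Nonempty → c ≤ rolewiczModN N t)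
    (hg : Good N parasolBase L C) : 0 ≤ L * (1 - 2 / 3 * c) := by
  obtain ⟨f, hf, hC⟩ := hg
  have := fork (t := t) (c := c) (C := C) (L := L) h (r := f P1V.r)
      (b := f P1V.b)
      (s := f P1V.s) (T := fun i => f (P1V.t i))
      (hf (Sum.inl ())) (fun i => hf (Sum.inr (Sum.inl i)))
      (fun i => hf (Sum.inr (Sum.inr i)))
      (fun i j hij => le_trans (by exact_mod_cast base_tt i j hij) (hC _ _)) htL hc
  have h2 := h.nn (f P1V.r - f P1V.s)
  linarith

lemma good_pos {N : Y → ℝ} (h : IsN N) {n : ℕ} {L C : ℝ} (hg : Good N (parasolData n) L C) :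
    0 < C ∧ 0 < L ∧ 1 ≤ C * L := by
  obtain ⟨f, hf, hC⟩ := hg
  cases n with
  | zero =>
    exact fork_pos h (b := f P1V.b) (T := fun i => f (P1V.t i))
      (fun i => hf (Sum.inr (Sum.inl i)))
      (fun i j hij => le_trans (by exact_mod_cast base_tt i j hij) (hC _ _))
  | succ n =>
    obtain ⟨e⟩ := data_ne n
    exact fork_pos h (b := f (stepB _ e)) (T := fun i => f (stepT _ e i))
      (fun i => hf (e, Sum.inr (Sum.inl i)))
      (fun i j hij => le_trans (by exact_mod_cast step_tt _ (data_conn n) e i j hij) (hC _ _))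

lemma good_beta {N : Y → ℝ} (h : IsN N) {K C : ℝ} (hK : 0 < K) 
    (hm : 0 < rolewiczModN N (2 / K)) (n : ℕ) : ∀ L : ℝ, C * L ≤ K →
    Good N (parasolData n) L C → 1 ≤ C * L * (1 - 2 / 3 * rolewiczModN N (2 / K)) ^ n := by
  have hm1 := rolewiczModN_le_one h (2 / K)
  induction n with
  | zero => intro L _ hg; simpa using (good_pos h hg).2.2
  | succ n ih =>
    intro L hLK hg
    obtain ⟨hC, hL, _⟩ := good_pos h hg
    have hle : 2 / K * (C * L) ≤ 2 := by
      calc 2 / K * (C * L) ≤ 2 / K * K := by gcongr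
        _ = 2 := by field_simp
    have := ih _ ?_ (good_step h _ (data_conn n) hle (fun _ _ => le_refl _) hg)
    · rw [pow_succ]; linarith
    · refine le_trans ?_ hLK
      have : 0 < C * L := by positivity
      nlinarith

lemma good_betap {N : Y → ℝ} (h : IsN N) {p γ A C : ℝ} (hp : 1 < p) (hγ : 0 < γ)
    (hb : ∀ t : ℝ, 0 < t → t ≤ 2 → (rolewiczSetN N t).Nonempty → γ * t ^ p ≤ rolewiczModN N t)
    (n : ℕ) : ∀ L : ℝ, L ≤ A → Good N (parasolData n) L C →
    ((n : ℝ) + 1) * (2 / 3 * γ * (2 / C) ^ p * A ^ (1 - p)) ≤ L := by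
  have step : ∀ n L, L ≤ A → Good N (parasolData n) L C →
      0 < 2 / (C * L) ∧ 2 / (C * L) * (C * L) ≤ 2 ∧ 
      L * (1 - 2 / 3 * (γ * (2 / (C * L)) ^ p))
        ≤ L - 2 / 3 * γ * (2 / C) ^ p * A ^ (1 - p) ∧
      L * (1 - 2 / 3 * (γ * (2 / (C * L)) ^ p)) ≤ A := by
    intro n L hLA hg
    obtain ⟨hC, hL, _⟩ := good_pos h hg
    refine ⟨by positivity, by rw [div_mul_cancel₀ _ (by positivity)], ?_, ?_⟩
    · have h1 : (2 / (C * L)) ^ p = (2 / C) ^ p * L ^ (-p) := by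
        rw [← div_div, Real.div_rpow (by positivity) hL.le, Real.rpow_neg hL.le, div_eq_mul_inv]
      have h2 : L ^ (1 - p) = L * L ^ (-p) := by
        rw [sub_eq_add_neg, Real.rpow_add hL, Real.rpow_one]
      have h3 : A ^ (1 - p) ≤ L ^ (1 - p) :=
        Real.rpow_le_rpow_of_nonpos hL hLA (by linarith)
      have h4 : 2 / 3 * γ * (2 / C) ^ p * A ^ (1 - p) ≤ 2 / 3 * γ * (2 / C) ^ p * L ^ (1 - p) := by
        gcongr
      rw [h2] at h4
      rw [h1]
      linarith
    · have : 0 ≤ L * (γ * (2 / (C * L)) ^ p) := by positivity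
      linarith
  induction n with
  | zero =>
    intro L hLA hg
    obtain ⟨h1, h2, h3, h4⟩ := step 0 L hLA hg
    have := good_base h h2 (hb _ h1) hg
    simp only [Nat.cast_zero, zero_add, one_mul]
    linarith
  | succ n ih =>
    intro L hLA hg
    obtain ⟨h1, h2, h3, h4⟩ := step _ L hLA hg
    have := ih _ h4 (good_step h _ (data_conn n) h2 (hb _ h1) hg)
    push_cast
    linarith

lemma norm_isN : IsN (fun y : Y => ‖y‖) :=
  ⟨norm_add_le, fun c x => by rw [norm_smul, Real.norm_eq_abs], norm_nonneg⟩

lemma good_of_lip {n : ℕ} {f : PVert n → Y} {L C : ℝ}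
    (hL : LipUB (pGDist n) (fun a b : Y => dist a b) f L)
    (hC : CoLipUB (pGDist n) (fun a b : Y => dist a b) f C) :
    Good (fun y : Y => ‖y‖) (parasolData n) L C := by
  have hL0 : 0 ≤ L := by
    have hpos : ∃ u v, 0 < pGDist n u v := by
      cases n with
      | zero => 
        refine ⟨P1V.t 0, P1V.t 1, ?_⟩
        have : 2 ≤ (parasolGraph 0).dist (P1V.t 0) (P1V.t 1) := base_tt 0 1 (by norm_num)
        exact Nat.cast_pos.mpr (lt_of_lt_of_le Nat.zero_lt_two this)
      | succ n =>
        obtain ⟨e⟩ := data_ne n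
        refine ⟨stepT _ e 0, stepT _ e 1, ?_⟩
        have : 2 ≤ (parasolGraph (n + 1)).dist (stepT _ e 0) (stepT _ e 1) :=
          step_tt _ (data_conn n) e 0 1 (by norm_num)
        exact Nat.cast_pos.mpr (lt_of_lt_of_le Nat.zero_lt_two this)
    obtain ⟨u, v, huv⟩ := hpos
    have h1 := hL u v
    have h2 : 0 ≤ dist (f u) (f v) := dist_nonneg
    by_contra hneg
    push Not at hneg
    nlinarith
  refine ⟨f, fun e => ?_, fun u v => ?_⟩
  · have h1 := hL ((parasolData n).2.2 e).1 ((parasolData n).2.2 e).2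
    have h2 : pGDist n ((parasolData n).2.2 e).1 ((parasolData n).2.2 e).2 ≤ 1 := by
      exact Nat.cast_le_one.mpr (dGraph_edge_dist (parasolData n) e)
    simp only [dist_eq_norm] at h1
    exact h1.trans (by nlinarith)
  · have h1 := hC u v
    simp only [dist_eq_norm] at h1
    exact h1

end analytic

/-- Theorem 2.8: if `Y` admits an equivalent norm with property (β)
then `sup_{ℓ ≥ 1} c_Y(P^ω_ℓ) = ∞`; moreover if `Y` itself has property (β_p) with
constant `γ` then `c_Y(P^ω_ℓ) ≥ 2 (2γ/3)^{1/p} ℓ^{1/p}` for every `ℓ ≥ 1`. -/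
theorem parasol_distortion_lower_bound
    (Y : Type*) [NormedAddCommGroup Y] [NormedSpace ℝ Y] [CompleteSpace Y]
    (hY : AdmitsBetaNorm Y) :
    (∀ M : ℝ, 0 < M → ∃ l : ℕ, 1 ≤ l ∧
      ENNReal.ofReal M < cDist (PVert (l - 1)) Y (pGDist (l - 1)) (fun a b : Y => dist a b)) ∧
    (∀ p γ : ℝ, 1 < p → 0 < γ → HasBetaP Y p γ → ∀ l : ℕ, 1 ≤ l →
      ENNReal.ofReal (2 * (2 * γ / 3) ^ (1 / p) * (l : ℝ) ^ (1 / p)) ≤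
        cDist (PVert (l - 1)) Y (pGDist (l - 1)) (fun a b : Y => dist a b)) := by
  constructor
  · intro M hM
    obtain ⟨N, ⟨htri, hhom, a, b, ha, hab, hN⟩, hβ⟩ := hY
    have hb : 0 < b := ha.trans_le hab
    have h : IsN N := ⟨htri, hhom, fun x => le_trans (by positivity) (hN x).1⟩
    by_contra hcon
    push Not at hcon
    obtain ⟨K, hK⟩ : ∃ K, K = max 1 (b / a * (M + 1)) := ⟨_, rfl⟩
    have hK1 : 1 ≤ K := hK ▸ le_max_left _ _
    have hK2 : b / a * (M + 1) ≤ K := hK ▸ le_max_right _ _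
    have hK0 : 0 < K := by linarith
    have hm : 0 < rolewiczModN N (2 / K) :=
      hβ _ (by positivity) (by rw [div_le_iff₀ hK0]; linarith)
    have hm1 := rolewiczModN_le_one h (2 / K)
    obtain ⟨q, hq⟩ : ∃ q, q = 1 - 2 / 3 * rolewiczModN N (2 / K) := ⟨_, rfl⟩
    obtain ⟨n, hn⟩ := exists_pow_lt_of_lt_one (show (0 : ℝ) < 1 / K by positivity)
      (show q < 1 by linarith)
    have hlt : cDist (PVert n) Y (pGDist n) (fun a b : Y => dist a b)
        < ENNReal.ofReal (M + 1) := by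
      have : cDist (PVert n) Y (pGDist n) (fun a b : Y => dist a b) ≤ ENNReal.ofReal M :=
        hcon (n + 1) (by omega)
      exact this.trans_lt ((ENNReal.ofReal_lt_ofReal_iff (by linarith)).mpr (by linarith))
    simp only [cDist, iInf_lt_iff] at hlt
    obtain ⟨D, ⟨f, _, L, C, hL, hC, rfl⟩, hD⟩ := hlt
    have hD' : L * C < M + 1 := (ENNReal.ofReal_lt_ofReal_iff (by linarith)).mp hD
    have hg := good_of_lip hL hC
    obtain ⟨hC0, hL0, hCL⟩ := good_pos norm_isN hg
    have hg' : Good N (parasolData n) (b * L) (C / a) := by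
      obtain ⟨f, h1, h2⟩ := hg
      refine ⟨f, fun e => (hN _).2.trans (mul_le_mul_of_nonneg_left (h1 e) hb.le),
        fun u v => (h2 u v).trans ?_⟩
      rw [div_mul_eq_mul_div, le_div_iff₀ ha]
      have := mul_le_mul_of_nonneg_left (hN (f u - f v)).1 hC0.le
      dsimp only
      linarith
    have hle : C / a * (b * L) ≤ K := by
      refine le_trans ?_ hK2
      have : C / a * (b * L) = b / a * (L * C) := by ring
      rw [this]
      gcongr
    have h1 := good_beta h hK0 hm n _ hle hg'
    rw [← hq] at h1
    have hq0 : 0 ≤ q ^ n := pow_nonneg (by linarith) n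
    have h2 : C / a * (b * L) * q ^ n ≤ K * q ^ n := by gcongr
    have h3 : K * q ^ n < K * (1 / K) := by gcongr
    have h4 : K * (1 / K) = 1 := by field_simp
    linarith
  · intro p γ hp hγ hβ l hl
    obtain ⟨n, rfl⟩ : ∃ n, l = n + 1 := ⟨l - 1, by omega⟩
    change _ ≤ cDist (PVert n) Y (pGDist n) (fun a b : Y => dist a b)
    refine le_iInf₂ ?_
    rintro D ⟨f, _, L, C, hL, hC, rfl⟩
    apply ENNReal.ofReal_le_ofReal
    have hg := good_of_lip hL hC
    obtain ⟨hC0, hL0, hCL⟩ := good_pos norm_isN hg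
    have h1 := good_betap norm_isN hp hγ hβ n L le_rfl hg
    have hp0 : 0 < p := by linarith
    have hLp : L ^ (1 - p) = L / L ^ p := by rw [Real.rpow_sub hL0, Real.rpow_one]
    have hLpp : 0 < L ^ p := Real.rpow_pos_of_pos hL0 p
    have hCpp : 0 < C ^ p := Real.rpow_pos_of_pos hC0 p
    have h2p : 0 < (2 : ℝ) ^ p := by positivity
    have key : (2 * γ / 3) * ((n : ℝ) + 1) ≤ (L * C / 2) ^ p := by
      rw [Real.div_rpow (by positivity) (by norm_num), Real.mul_rpow hL0.le hC0.le,
        le_div_iff₀ h2p]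
      rw [hLp, Real.div_rpow (by norm_num) hC0.le] at h1
      have h3 : ((n : ℝ) + 1) * (2 / 3 * γ * (2 ^ p / C ^ p) * (L / L ^ p))
          = (2 * γ / 3 * ((n : ℝ) + 1) * 2 ^ p) / (L ^ p * C ^ p) * L := by
        field_simp
      rw [h3] at h1
      have h4 : (2 * γ / 3 * ((n : ℝ) + 1) * 2 ^ p) / (L ^ p * C ^ p) ≤ 1 := by
        by_contra hh
        push Not at hh
        nlinarith
      rwa [div_le_one (by positivity)] at h4
    have h5 := Real.rpow_le_rpow (by positivity) key (show 0 ≤ 1 / p by positivity)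
    rw [Real.mul_rpow (by positivity) (by positivity), ← Real.rpow_mul (by positivity),
      mul_one_div_cancel hp0.ne', Real.rpow_one] at h5
    push_cast
    linarith

end
end

section
/- Let p ∈ (1,∞), let T = (V,E,w) be a weighted tree rooted at a vertex r, let κ ≥ 1 be an integer, and let χ : E → C be a κ-caterpillar coloring of T. Then there exists a map f : V → ℓ^p(C) such that for all x, y ∈ V: ‖f(x) − f(y)‖_p ≤ (6·ln(2κ))^{1/p}·ρ_T(x,y) and ρ_T(x,y) ≤ 96·‖f(x) − f(y)‖_p. In particular, c_{ℓ^p(C)}(T) ≤ 96·(6·ln(2κ))^{1/p}. -/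
open Set Function Filter

open scoped ENNReal

attribute [local instance] Classical.propDecidable

noncomputable section

structure RootedWTree (V : Type*) where
  root : V
  parent : V → V
  w : V → ℝ
  parent_root : parent root = root
  reach : ∀ v : V, ∃ n : ℕ, parent^[n] v = root
  w_pos : ∀ v : V, v ≠ root → 0 < w v

namespace RootedWTree

variable {V : Type*} (T : RootedWTree V)

def up (v : V) (n : ℕ) : V := T.parent^[n] v

def Anc (u v : V) : Prop := ∃ n : ℕ, T.up v n = u

lemma exists_anc (x y : V) : ∃ n : ℕ, T.Anc (T.up x n) y := by
  obtain ⟨n, hn⟩ := T.reach x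
  obtain ⟨m, hm⟩ := T.reach y
  exact ⟨n, m, by simp only [up]; rw [hm, hn]⟩

def climb (x y : V) : ℕ := Nat.find (T.exists_anc x y)

def rho (x y : V) : ℝ :=
  (∑ k ∈ Finset.range (T.climb x y), T.w (T.up x k)) +
  (∑ k ∈ Finset.range (T.climb y x), T.w (T.up y k))

def pathEdges (x y : V) : List V :=
  ((List.range (T.climb x y)).map (fun k => T.up x k)) ++
  ((List.range (T.climb y x)).map (fun k => T.up y k))

def MonotoneClass {C : Type*} (χ : V → C) (c : C) : Prop :=
  (∀ u v : V, u ≠ T.root → v ≠ T.root → χ u = c → χ v = c → T.Anc u v ∨ T.Anc v u) ∧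
  (∀ (v : V) (n : ℕ), v ≠ T.root → χ v = c → T.up v n ≠ T.root → χ (T.up v n) = c →
    ∀ k ≤ n, χ (T.up v k) = c)

def IsMonotoneColoring {C : Type*} (χ : V → C) : Prop := ∀ c : C, T.MonotoneClass χ c

def IsBranch (P : Set V) : Prop := IsMaxChain (fun u v => T.Anc u v) P

def IsCaterpillar {C : Type*} (χ : V → C) (κ : ℕ) : Prop :=
  T.IsMonotoneColoring χ ∧
  ∀ P : Set V, T.IsBranch P → ∃ s : Finset C, s.card ≤ κ ∧ ∀ v ∈ P, v ≠ T.root → χ v ∈ s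

def colorLen {C : Type*} (χ : V → C) (c : C) (x y : V) : ℝ :=
  (((T.pathEdges x y).filter (fun e => decide (χ e = c))).map T.w).sum

def IsStrong {C : Type*} (χ : V → C) (δ : ℝ) : Prop :=
  T.IsMonotoneColoring χ ∧
  ∀ x y : V, x ≠ y →
    T.rho x y / 2 ≤
      (((T.pathEdges x y).filter
        (fun e => decide (δ * T.rho x y ≤ T.colorLen χ (χ e) x y))).map T.w).sum

end RootedWTree


namespace RootedWTree

section Helpers

variable {V C : Type*} (T : RootedWTree V)

lemma up_add (v : V) (m n : ℕ) : T.up (T.up v m) n = T.up v (m + n) := by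
  simp only [up]
  rw [← Function.iterate_add_apply, add_comm]

lemma up_root (n : ℕ) : T.up T.root n = T.root := by
  simp only [up]
  exact Function.iterate_fixed T.parent_root n

lemma anc_refl (v : V) : T.Anc v v := ⟨0, rfl⟩

lemma anc_trans {u v x : V} (h1 : T.Anc u v) (h2 : T.Anc v x) : T.Anc u x := by
  obtain ⟨n, rfl⟩ := h1
  obtain ⟨m, rfl⟩ := h2
  exact ⟨m + n, (T.up_add x m n).symm⟩

lemma anc_comparable {u v x : V} (h1 : T.Anc u x) (h2 : T.Anc v x) : T.Anc u v ∨ T.Anc v u := by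
  obtain ⟨n, rfl⟩ := h1
  obtain ⟨m, rfl⟩ := h2
  rcases le_total n m with h | h
  · right
    exact ⟨m - n, by rw [up_add, Nat.add_sub_cancel' h]⟩
  · left
    exact ⟨n - m, by rw [up_add, Nat.add_sub_cancel' h]⟩

def depth (v : V) : ℕ := Nat.find (T.reach v)

lemma up_depth (v : V) : T.up v (T.depth v) = T.root := Nat.find_spec (T.reach v)

lemma up_ne_root {v : V} {n : ℕ} (h : n < T.depth v) : T.up v n ≠ T.root :=
  Nat.find_min (T.reach v) h

lemma up_eq_root {v : V} {n : ℕ} (h : T.depth v ≤ n) : T.up v n = T.root := by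
  obtain ⟨k, rfl⟩ := Nat.exists_eq_add_of_le h
  rw [← up_add, up_depth, up_root]

lemma up_inj_aux {v : V} {i j : ℕ} (hij : i < j) (hj : j < T.depth v) : T.up v i ≠ T.up v j := by
  intro h
  have h1 : T.up v (i + (T.depth v - j)) = T.root := by
    rw [← up_add, h, up_add, Nat.add_sub_cancel' hj.le, up_depth]
  exact T.up_ne_root (by omega) h1

lemma up_injOn (v : V) : Set.InjOn (T.up v) {n | n < T.depth v} := by
  intro i hi j hj h
  rcases lt_trichotomy i j with h1 | h1 | h1
  · exact absurd h (T.up_inj_aux h1 hj)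
  · exact h1
  · exact absurd h.symm (T.up_inj_aux h1 hi)

lemma anc_antisymm {x y : V} (h1 : T.Anc x y) (h2 : T.Anc y x) : x = y := by
  obtain ⟨n, hn⟩ := h1
  obtain ⟨m, hm⟩ := h2
  have h3 : T.up y (n + m) = y := by rw [← up_add, hn, hm]
  by_cases hd : n + m < T.depth y
  · have : n + m = 0 := T.up_injOn y (show n + m ∈ {k | k < T.depth y} from hd)
      (show 0 ∈ {k | k < T.depth y} from by simp only [Set.mem_ofPred_eq]; omega) h3
    have hn0 : n = 0 := by omega
    subst hn0
    exact hn.symm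
  · have hy : y = T.root := by rw [← h3]; exact T.up_eq_root (not_lt.mp hd)
    rw [hy, up_root] at hn
    rw [hy, hn]

/-- The edges on the path from the root to `v`. -/
def P (v : V) : Finset V := (Finset.range (T.depth v)).image (T.up v)

lemma mem_P {u v : V} : u ∈ T.P v ↔ T.Anc u v ∧ u ≠ T.root := by
  simp only [P, Finset.mem_image, Finset.mem_range]
  constructor
  · rintro ⟨n, hn, rfl⟩
    exact ⟨⟨n, rfl⟩, T.up_ne_root hn⟩
  · rintro ⟨⟨n, rfl⟩, h⟩
    refine ⟨n, ?_, rfl⟩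
    by_contra h'
    exact h (T.up_eq_root (not_lt.mp h'))

lemma self_mem {v : V} (h : v ≠ T.root) : v ∈ T.P v := T.mem_P.2 ⟨T.anc_refl v, h⟩

lemma self_mem' {u v : V} (h : u ∈ T.P v) : u ∈ T.P u := T.self_mem (T.mem_P.1 h).2

lemma P_trans {u v x : V} (h1 : u ∈ T.P v) (h2 : v ∈ T.P x) : u ∈ T.P x := by
  rw [mem_P] at *
  exact ⟨T.anc_trans h1.1 h2.1, h1.2⟩

lemma P_comp {u v x : V} (h1 : u ∈ T.P x) (h2 : v ∈ T.P x) : u ∈ T.P v ∨ v ∈ T.P u := by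
  rw [mem_P] at h1 h2
  rcases T.anc_comparable h1.1 h2.1 with h | h
  · exact Or.inl (T.mem_P.2 ⟨h, h1.2⟩)
  · exact Or.inr (T.mem_P.2 ⟨h, h2.2⟩)

lemma w_pos_of_mem {u v : V} (h : u ∈ T.P v) : 0 < T.w u := T.w_pos u (T.mem_P.1 h).2

lemma P_eq {x y : V} (h1 : T.P x \ T.P y = ∅) (h2 : T.P y \ T.P x = ∅) : x = y := by
  rw [Finset.sdiff_eq_empty_iff_subset] at h1 h2
  by_cases hx : x = T.root
  · by_cases hy : y = T.root
    · rw [hx, hy]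
    · have := h2 (T.self_mem hy)
      have h3 := (T.mem_P.1 this).1
      obtain ⟨n, hn⟩ := h3
      rw [hx, up_root] at hn
      exact absurd hn.symm hy
  · have hxy := T.mem_P.1 (h1 (T.self_mem hx))
    by_cases hy : y = T.root
    · obtain ⟨n, hn⟩ := hxy.1
      rw [hy, up_root] at hn
      exact absurd hn.symm hx
    · exact T.anc_antisymm hxy.1 (T.mem_P.1 (h2 (T.self_mem hy))).1

lemma lt_climb {x y : V} {k : ℕ} : k < T.climb x y ↔ ¬ T.Anc (T.up x k) y := by
  rw [climb, Nat.lt_find_iff]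
  constructor
  · intro h
    exact h k le_rfl
  · intro h m hm hm'
    apply h
    refine T.anc_trans ?_ hm'
    exact ⟨k - m, by rw [up_add, Nat.add_sub_cancel' hm]⟩

lemma anc_root (y : V) : T.Anc T.root y := ⟨T.depth y, T.up_depth y⟩

lemma sum_climb (x y : V) :
    ∑ k ∈ Finset.range (T.climb x y), T.w (T.up x k) = ∑ v ∈ T.P x \ T.P y, T.w v := by
  have hlt : ∀ k, k < T.climb x y → k < T.depth x := by
    intro k hk
    by_contra h
    rw [lt_climb, T.up_eq_root (not_lt.mp h)] at hk
    exact hk (T.anc_root y)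
  have : T.P x \ T.P y = (Finset.range (T.climb x y)).image (T.up x) := by
    ext v
    simp only [Finset.mem_sdiff, Finset.mem_image, Finset.mem_range]
    constructor
    · rintro ⟨h1, h2⟩
      obtain ⟨⟨n, rfl⟩, hr⟩ := T.mem_P.1 h1
      refine ⟨n, ?_, rfl⟩
      rw [lt_climb]
      intro h
      exact h2 (T.mem_P.2 ⟨h, hr⟩)
    · rintro ⟨n, hn, rfl⟩
      refine ⟨T.mem_P.2 ⟨⟨n, rfl⟩, T.up_ne_root (hlt n hn)⟩, ?_⟩
      intro h
      exact (T.lt_climb.1 hn) (T.mem_P.1 h).1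
  rw [this, Finset.sum_image]
  intro i hi j hj h
  simp only [Finset.coe_range, Set.mem_Iio] at hi hj
  exact T.up_injOn x (hlt i hi) (hlt j hj) h

lemma rho_eq (x y : V) :
    T.rho x y = ∑ v ∈ T.P x \ T.P y, T.w v + ∑ v ∈ T.P y \ T.P x, T.w v := by
  rw [rho, sum_climb, sum_climb]

lemma mono_comp {χ : V → C} (h : T.IsMonotoneColoring χ) {u v x y : V} (hu : u ∈ T.P x)
    (hv : v ∈ T.P y) (huv : χ u = χ v) : u ∈ T.P v ∨ v ∈ T.P u := by
  have hu' := (T.mem_P.1 hu).2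
  have hv' := (T.mem_P.1 hv).2
  rcases (h (χ v)).1 u v hu' hv' huv rfl with h | h
  · exact Or.inl (T.mem_P.2 ⟨h, hu'⟩)
  · exact Or.inr (T.mem_P.2 ⟨h, hv'⟩)

lemma mono_conv {χ : V → C} (h : T.IsMonotoneColoring χ) {u t v x : V} (hut : u ∈ T.P t)
    (htv : t ∈ T.P v) (hv : v ∈ T.P x) {c : C} (hu : χ u = c) (hvc : χ v = c) : χ t = c := by
  obtain ⟨⟨j, rfl⟩, hur⟩ := T.mem_P.1 hut
  obtain ⟨⟨k, rfl⟩, htr⟩ := T.mem_P.1 htv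
  rw [up_add] at hu hur
  exact (h c).2 v (k + j) (T.mem_P.1 hv).2 hvc hur hu k (by omega)

lemma card_colors {χ : V → C} {κ : ℕ} (h : T.IsCaterpillar χ κ) (x : V) :
    ((T.P x).image χ).card ≤ κ := by
  have hc : IsChain (fun u v => T.Anc u v) (T.P x : Set V) := by
    intro u hu v hv _
    exact T.anc_comparable (T.mem_P.1 hu).1 (T.mem_P.1 hv).1
  obtain ⟨M, hM, hsub⟩ := hc.exists_maxChain
  obtain ⟨s, hs, hs'⟩ := h.2 M hM
  refine le_trans (Finset.card_le_card ?_) hs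
  intro c hcc
  obtain ⟨v, hv, rfl⟩ := Finset.mem_image.1 hcc
  exact hs' v (hsub hv) (T.mem_P.1 hv).2

/-- Length of colour `c` on the root path. -/
def A (χ : V → C) (c : C) (v : V) : Finset V := (T.P v).filter (fun u => χ u = c)
def B (χ : V → C) (c : C) (v : V) : Finset V := (T.P v).filter (fun u => ∃ t ∈ T.P u, χ t = c)
def d (χ : V → C) (c : C) (v : V) : ℝ := ∑ u ∈ T.A χ c v, T.w u
def D (χ : V → C) (c : C) (v : V) : ℝ := ∑ u ∈ T.B χ c v, T.w u

lemma mem_A {χ : V → C} {c : C} {u v : V} : u ∈ T.A χ c v ↔ u ∈ T.P v ∧ χ u = c := by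
  simp [A]
lemma mem_B {χ : V → C} {c : C} {u v : V} :
    u ∈ T.B χ c v ↔ u ∈ T.P v ∧ ∃ t ∈ T.P u, χ t = c := by
  simp [B]

lemma A_sub_B (χ : V → C) (c : C) (v : V) : T.A χ c v ⊆ T.B χ c v := by
  intro u hu
  rw [mem_A] at hu
  exact T.mem_B.2 ⟨hu.1, u, T.self_mem' hu.1, hu.2⟩

lemma sum_mono {x : V} {s t : Finset V} (h : s ⊆ t) (ht : t ⊆ T.P x) :
    ∑ u ∈ s, T.w u ≤ ∑ u ∈ t, T.w u :=
  Finset.sum_le_sum_of_subset_of_nonneg h (fun i hi _ => (T.w_pos_of_mem (ht hi)).le)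

lemma A_sub_P (χ : V → C) (c : C) (v : V) : T.A χ c v ⊆ T.P v := Finset.filter_subset _ _
lemma B_sub_P (χ : V → C) (c : C) (v : V) : T.B χ c v ⊆ T.P v := Finset.filter_subset _ _

lemma d_le_D (χ : V → C) (c : C) (v : V) : T.d χ c v ≤ T.D χ c v :=
  T.sum_mono (T.A_sub_B χ c v) (T.B_sub_P χ c v)

lemma d_nonneg (χ : V → C) (c : C) (v : V) : 0 ≤ T.d χ c v :=
  Finset.sum_nonneg (fun i hi => (T.w_pos_of_mem (T.A_sub_P χ c v hi)).le)

lemma D_nonneg (χ : V → C) (c : C) (v : V) : 0 ≤ T.D χ c v :=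
  (T.d_nonneg χ c v).trans (T.d_le_D χ c v)

lemma d_pos {χ : V → C} {c : C} {u v : V} (hu : u ∈ T.P v) (hc : χ u = c) : 0 < T.d χ c v :=
  Finset.sum_pos (fun i hi => (T.w_pos_of_mem (T.A_sub_P χ c v hi)))
    ⟨u, T.mem_A.2 ⟨hu, hc⟩⟩

lemma d_pos' {χ : V → C} {c : C} {v : V} (hc : c ∈ (T.P v).image χ) : 0 < T.d χ c v := by
  obtain ⟨u, hu, h⟩ := Finset.mem_image.1 hc
  exact T.d_pos hu h

lemma d_zero {χ : V → C} {c : C} {v : V} (h : ∀ u ∈ T.P v, χ u ≠ c) : T.d χ c v = 0 := by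
  have : T.A χ c v = ∅ := by
    apply Finset.eq_empty_of_forall_notMem
    intro u hu
    exact h u (T.mem_A.1 hu).1 (T.mem_A.1 hu).2
  simp [d, this]

/-- key ordering lemma -/
lemma sub_of_D_le {χ : V → C} {c c' : C} {v : V} (hc : c ∈ (T.P v).image χ)
    (h : T.D χ c' v ≤ T.D χ c v) : T.A χ c' v ⊆ T.B χ c v := by
  intro u hu
  rw [mem_A] at hu
  by_contra hB
  have hB' : ∀ t ∈ T.P u, χ t ≠ c := by
    intro t ht htc
    exact hB (T.mem_B.2 ⟨hu.1, t, ht, htc⟩)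
  have hsub : insert u (T.B χ c v) ⊆ T.B χ c' v := by
    intro a ha
    rcases Finset.mem_insert.1 ha with rfl | ha
    · exact T.A_sub_B χ c' v (T.mem_A.2 hu)
    · obtain ⟨hav, t, ht, htc⟩ := T.mem_B.1 ha
      have htv := T.P_trans ht hav
      rcases T.P_comp hu.1 htv with h1 | h1
      · exact T.mem_B.2 ⟨hav, u, T.P_trans h1 ht, hu.2⟩
      · exact absurd htc (hB' t h1)
  have h2 := T.sum_mono hsub (T.B_sub_P χ c' v)
  rw [Finset.sum_insert hB] at h2
  have := T.w_pos_of_mem hu.1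
  simp only [D] at h
  linarith

lemma sum_d_eq (χ : V → C) (s : Finset C) (v : V) :
    ∑ c ∈ s, T.d χ c v = ∑ u ∈ (T.P v).filter (fun u => χ u ∈ s), T.w u := by
  rw [← Finset.sum_fiberwise_of_maps_to (s := (T.P v).filter (fun u => χ u ∈ s)) (t := s) (g := χ)
    (fun u hu => (Finset.mem_filter.1 hu).2)]
  refine Finset.sum_congr rfl (fun c hc => ?_)
  rw [d]
  refine Finset.sum_congr ?_ (fun _ _ => rfl)
  ext u
  simp only [mem_A, Finset.mem_filter]
  constructor
  · rintro ⟨h1, rfl⟩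
    exact ⟨⟨h1, hc⟩, rfl⟩
  · rintro ⟨⟨h1, _⟩, h2⟩
    exact ⟨h1, h2⟩

lemma sum_d_le_D {χ : V → C} {c : C} {s : Finset C} {v : V} (hc : c ∈ (T.P v).image χ)
    (h : ∀ c' ∈ s, T.D χ c' v ≤ T.D χ c v) : ∑ c' ∈ s, T.d χ c' v ≤ T.D χ c v := by
  rw [sum_d_eq]
  refine T.sum_mono ?_ (T.B_sub_P χ c v)
  intro u hu
  obtain ⟨h1, h2⟩ := Finset.mem_filter.1 hu
  exact T.sub_of_D_le hc (h _ h2) (T.mem_A.2 ⟨h1, rfl⟩)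

lemma last_le_D {χ : V → C} (hm : T.IsMonotoneColoring χ) {c : C} {v : V}
    (hv : v ≠ T.root) (hc : c ∈ (T.P v).image χ) :
    T.d χ (χ v) v ≤ T.D χ c v := by
  refine T.sum_mono ?_ (T.B_sub_P χ c v)
  intro u hu
  rw [mem_A] at hu
  obtain ⟨t, ht, htc⟩ := Finset.mem_image.1 hc
  rw [mem_B]
  refine ⟨hu.1, ?_⟩
  rcases T.P_comp hu.1 ht with h | h
  · have := T.mono_conv hm h ht (T.self_mem hv) hu.2 rfl
    exact ⟨u, T.self_mem' hu.1, by rw [hu.2, ← this, htc]⟩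
  · exact ⟨t, h, htc⟩

lemma log_aux (d D : C → ℝ) (δ : ℝ) (hδ : 0 < δ) (S : Finset C)
    (hd : ∀ c ∈ S, 0 < d c) (hD : ∀ c ∈ S, δ ≤ D c)
    (hs : ∀ s ⊆ S, ∀ c ∈ S, (∀ c' ∈ s, D c' ≤ D c) → ∑ c' ∈ s, d c' ≤ D c) :
    ∑ c ∈ S, d c / D c ≤ 2 * Real.log (1 + (∑ c ∈ S, d c) / δ) := by
  induction S using Finset.induction_on_max_value D with
  | empty => simp
  | insert a S ha hmax ih =>
    have ih' := ih (fun c hc => hd c (Finset.mem_insert_of_mem hc))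
      (fun c hc => hD c (Finset.mem_insert_of_mem hc))
      (fun s hsS c hc => hs s (hsS.trans (Finset.subset_insert _ _)) c (Finset.mem_insert_of_mem hc))
    have h1 : ∑ c ∈ insert a S, d c ≤ D a := by
      refine hs _ (Finset.Subset.refl _) a (Finset.mem_insert_self _ _) ?_
      intro c hc
      rcases Finset.mem_insert.1 hc with rfl | hc
      · exact le_rfl
      · exact hmax c hc
    have hda := hd a (Finset.mem_insert_self _ _)
    have hDa := hD a (Finset.mem_insert_self _ _)
    rw [Finset.sum_insert ha] at h1
    rw [Finset.sum_insert ha, Finset.sum_insert ha]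
    have hS : 0 ≤ ∑ c ∈ S, d c :=
      Finset.sum_nonneg (fun c hc => (hd c (Finset.mem_insert_of_mem hc)).le)
    set σ := ∑ c ∈ S, d c with hσ
    have e1 : (1 + (d a + σ) / δ) = (δ + (d a + σ)) / δ := by field_simp
    have e2 : (1 + σ / δ) = (δ + σ) / δ := by field_simp
    rw [e2, Real.log_div (by positivity) hδ.ne'] at ih'
    rw [e1, Real.log_div (by positivity) hδ.ne']
    have h2 : 1 - ((δ + (d a + σ)) / (δ + σ))⁻¹ ≤ Real.log ((δ + (d a + σ)) / (δ + σ)) :=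
      Real.one_sub_inv_le_log_of_pos (by positivity)
    rw [Real.log_div (by positivity) (by positivity)] at h2
    have h3 : 1 - ((δ + (d a + σ)) / (δ + σ))⁻¹ = d a / (δ + (d a + σ)) := by
      field_simp
      ring
    have h4 : d a / D a ≤ 2 * (d a / (δ + (d a + σ))) := by
      rw [← mul_div_assoc, div_le_div_iff₀ (by linarith) (by positivity)]
      nlinarith
    rw [h3] at h2
    linarith

end Helpers

end RootedWTree

namespace RootedWTree

section Emb

variable {V C : Type*} (T : RootedWTree V)

lemma fact_one_le {p : ℝ} (hp : 1 < p) : Fact (1 ≤ ENNReal.ofReal p) := ⟨by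
  rw [← ENNReal.ofReal_one]; exact ENNReal.ofReal_le_ofReal hp.le⟩

/-- Increment of coordinate `c` along the edge `v`. -/
def g (χ : V → C) (κ : ℕ) (p : ℝ) (v : V) (c : C) : ℝ :=
  if T.d χ c v ≤ 2 * κ * T.d χ (χ v) v then (T.d χ c v / T.D χ c v) ^ (1 / p) else 0

lemma ratio_nonneg (χ : V → C) (c : C) (v : V) : 0 ≤ T.d χ c v / T.D χ c v :=
  div_nonneg (T.d_nonneg χ c v) (T.D_nonneg χ c v)

lemma ratio_le_one (χ : V → C) (c : C) (v : V) : T.d χ c v / T.D χ c v ≤ 1 :=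
  div_le_one_of_le₀ (T.d_le_D χ c v) (T.D_nonneg χ c v)

lemma g_nonneg (χ : V → C) (κ : ℕ) (p : ℝ) (v : V) (c : C) : 0 ≤ T.g χ κ p v c := by
  unfold g
  split_ifs
  · exact Real.rpow_nonneg (T.ratio_nonneg χ c v) _
  · exact le_rfl

lemma g_le_one (χ : V → C) (κ : ℕ) (p : ℝ) (hp : 1 < p) (v : V) (c : C) :
    T.g χ κ p v c ≤ 1 := by
  unfold g
  split_ifs
  · exact Real.rpow_le_one (T.ratio_nonneg χ c v) (T.ratio_le_one χ c v) (by positivity)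
  · exact zero_le_one

lemma g_zero {χ : V → C} {κ : ℕ} {p : ℝ} (hp : 1 < p) {v : V} {c : C}
    (h : ∀ u ∈ T.P v, χ u ≠ c) : T.g χ κ p v c = 0 := by
  unfold g
  rw [T.d_zero h, zero_div, Real.zero_rpow (by positivity), ite_self]

lemma g_zero' {χ : V → C} {κ : ℕ} {p : ℝ} (hp : 1 < p) {v : V} {c : C}
    (h : c ∉ (T.P v).image χ) : T.g χ κ p v c = 0 := by
  apply T.g_zero hp
  intro u hu huc
  exact h (Finset.mem_image.2 ⟨u, hu, huc⟩)

lemma g_rpow (χ : V → C) (κ : ℕ) (p : ℝ) (hp : 1 < p) (v : V) (c : C) :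
    T.g χ κ p v c ^ p =
      if T.d χ c v ≤ 2 * κ * T.d χ (χ v) v then T.d χ c v / T.D χ c v else 0 := by
  unfold g
  split_ifs
  · rw [← Real.rpow_mul (T.ratio_nonneg χ c v), one_div, inv_mul_cancel₀ (by positivity),
      Real.rpow_one]
  · exact Real.zero_rpow (by positivity)

lemma d_eq_D_self {χ : V → C} (hm : T.IsMonotoneColoring χ) {v : V} (hv : v ≠ T.root) :
    T.d χ (χ v) v = T.D χ (χ v) v := by
  refine le_antisymm (T.d_le_D _ _ _) ?_
  refine T.sum_mono ?_ (T.A_sub_P _ _ _)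
  intro u hu
  obtain ⟨h1, t, ht, htc⟩ := T.mem_B.1 hu
  exact T.mem_A.2 ⟨h1, T.mono_conv hm ht h1 (T.self_mem hv) htc rfl⟩

lemma ratio_self {χ : V → C} (hm : T.IsMonotoneColoring χ) {v : V} (hv : v ≠ T.root) :
    T.d χ (χ v) v / T.D χ (χ v) v = 1 := by
  rw [← T.d_eq_D_self hm hv]
  exact div_self (T.d_pos (T.self_mem hv) rfl).ne'

lemma g_self {χ : V → C} (hm : T.IsMonotoneColoring χ) {κ : ℕ} (hκ : 1 ≤ κ) (p : ℝ)
    {v : V} (hv : v ≠ T.root) : T.g χ κ p v (χ v) = 1 := by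
  have hκ' : (1 : ℝ) ≤ κ := by exact_mod_cast hκ
  have hd := T.d_nonneg χ (χ v) v
  unfold g
  rw [if_pos (by nlinarith), T.ratio_self hm hv, Real.one_rpow]

lemma log_bound {χ : V → C} {κ : ℕ} (hκ : 1 ≤ κ) (hχ : T.IsCaterpillar χ κ) (p : ℝ)
    (hp : 1 < p) {v : V} (hv : v ≠ T.root) :
    ∑ c ∈ (T.P v).image χ, T.g χ κ p v c ^ p ≤ 6 * Real.log (2 * κ) := by
  have hκ' : (1 : ℝ) ≤ κ := by exact_mod_cast hκ
  simp only [T.g_rpow χ κ p hp]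
  rw [← Finset.sum_filter]
  set S := ((T.P v).image χ).filter (fun c => T.d χ c v ≤ 2 * κ * T.d χ (χ v) v) with hS
  have hSi : S ⊆ (T.P v).image χ := Finset.filter_subset _ _
  set δ := T.d χ (χ v) v with hδ
  have hδ0 : 0 < δ := T.d_pos (T.self_mem hv) rfl
  have h1 := log_aux (fun c => T.d χ c v) (fun c => T.D χ c v) δ hδ0 S
    (fun c hc => T.d_pos' (hSi hc)) (fun c hc => T.last_le_D hχ.1 hv (hSi hc))
    (fun s hs c hc h => T.sum_d_le_D (hSi hc) h)
  have h2 : ∑ c ∈ S, T.d χ c v ≤ κ * (2 * κ * δ) := by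
    calc ∑ c ∈ S, T.d χ c v ≤ ∑ c ∈ S, (2 * κ * δ) :=
          Finset.sum_le_sum (fun c hc => (Finset.mem_filter.1 hc).2)
      _ = S.card * (2 * κ * δ) := by rw [Finset.sum_const, nsmul_eq_mul]
      _ ≤ κ * (2 * κ * δ) := by
          have : (S.card : ℝ) ≤ κ := by
            exact_mod_cast (Finset.card_le_card hSi).trans (T.card_colors hχ v)
          gcongr
  have h3 : (∑ c ∈ S, T.d χ c v) / δ ≤ 2 * κ ^ 2 := by
    rw [div_le_iff₀ hδ0]
    linarith
  have h0 : 0 ≤ (∑ c ∈ S, T.d χ c v) / δ :=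
    div_nonneg (Finset.sum_nonneg (fun c _ => T.d_nonneg χ c v)) hδ0.le
  have h4 : Real.log (1 + (∑ c ∈ S, T.d χ c v) / δ) ≤ Real.log ((2 * κ) ^ 3) := by
    apply Real.log_le_log (by linarith)
    nlinarith [mul_nonneg (sub_nonneg.2 hκ') (sq_nonneg (κ : ℝ))]
  rw [Real.log_pow] at h4
  push_cast at h4
  linarith

lemma memG (χ : V → C) (κ : ℕ) (p : ℝ) (hp : 1 < p) (v : V) :
    Memℓp (fun c => T.g χ κ p v c : C → ℝ) (ENNReal.ofReal p) := by
  have h0 : Memℓp (fun c => T.g χ κ p v c : C → ℝ) 0 := by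
    apply memℓp_zero
    refine ((T.P v).image χ).finite_toSet.subset ?_
    intro c hc
    by_contra h
    exact hc (T.g_zero' hp h)
  exact h0.of_exponent_ge (zero_le)

def G (χ : V → C) (κ : ℕ) (p : ℝ) (hp : 1 < p) (v : V) :
    lp (fun _ : C => ℝ) (ENNReal.ofReal p) := ⟨_, T.memG χ κ p hp v⟩

lemma G_apply (χ : V → C) (κ : ℕ) (p : ℝ) (hp : 1 < p) (v : V) (c : C) :
    T.G χ κ p hp v c = T.g χ κ p v c := rfl

lemma norm_G {χ : V → C} {κ : ℕ} (hκ : 1 ≤ κ) (hχ : T.IsCaterpillar χ κ) (p : ℝ)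
    (hp : 1 < p) {v : V} (hv : v ≠ T.root) :
    ‖T.G χ κ p hp v‖ ≤ (6 * Real.log (2 * κ)) ^ (1 / p) := by
  have hfact : Fact (1 ≤ ENNReal.ofReal p) := fact_one_le hp
  have hp0 : 0 < p := by linarith
  have htr : (ENNReal.ofReal p).toReal = p := ENNReal.toReal_ofReal hp0.le
  have h1 := lp.norm_rpow_eq_tsum (by rw [htr]; exact hp0) (T.G χ κ p hp v)
  rw [htr, tsum_eq_sum (s := (T.P v).image χ)] at h1
  · have h2 := T.log_bound hκ hχ p hp hv
    simp only [G_apply, Real.norm_of_nonneg (T.g_nonneg χ κ p v _)] at h1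
    rw [← h1] at h2
    rw [one_div]
    exact (Real.le_rpow_inv_iff_of_pos (norm_nonneg _) (le_trans (Real.rpow_nonneg (norm_nonneg _) _) h2) hp0).2 h2
  · intro c hc
    rw [G_apply, T.g_zero' hp hc, norm_zero, Real.zero_rpow hp0.ne']

def emb (χ : V → C) (κ : ℕ) (p : ℝ) (hp : 1 < p) (x : V) :
    lp (fun _ : C => ℝ) (ENNReal.ofReal p) := ∑ v ∈ T.P x, T.w v • T.G χ κ p hp v

lemma emb_apply (χ : V → C) (κ : ℕ) (p : ℝ) (hp : 1 < p) (x : V) (c : C) :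
    T.emb χ κ p hp x c = ∑ v ∈ T.P x, T.w v * T.g χ κ p v c := by
  rw [emb, lp.coeFn_sum, Finset.sum_apply]
  rfl

lemma sum_sub_sum {M : Type*} [AddCommGroup M] (F : V → M) (x y : V) :
    ∑ v ∈ T.P x, F v - ∑ v ∈ T.P y, F v =
      ∑ v ∈ T.P x \ T.P y, F v - ∑ v ∈ T.P y \ T.P x, F v := by
  rw [← Finset.sum_inter_add_sum_sdiff (T.P x) (T.P y) F,
    ← Finset.sum_inter_add_sum_sdiff (T.P y) (T.P x) F, Finset.inter_comm (T.P y) (T.P x)]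
  abel

lemma emb_lip {χ : V → C} {κ : ℕ} (hκ : 1 ≤ κ) (hχ : T.IsCaterpillar χ κ) (p : ℝ)
    (hp : 1 < p) (x y : V) :
    ‖T.emb χ κ p hp x - T.emb χ κ p hp y‖ ≤ (6 * Real.log (2 * κ)) ^ (1 / p) * T.rho x y := by
  have hfact : Fact (1 ≤ ENNReal.ofReal p) := fact_one_le hp
  have key : ∀ a b : V, ‖∑ v ∈ T.P a \ T.P b, T.w v • T.G χ κ p hp v‖ ≤
      (6 * Real.log (2 * κ)) ^ (1 / p) * ∑ v ∈ T.P a \ T.P b, T.w v := by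
    intro a b
    refine (norm_sum_le _ _).trans ?_
    rw [Finset.mul_sum]
    refine Finset.sum_le_sum (fun v hv => ?_)
    have hv' := (Finset.mem_sdiff.1 hv).1
    have hw := T.w_pos_of_mem hv'
    rw [norm_smul, Real.norm_of_nonneg hw.le, mul_comm]
    exact mul_le_mul_of_nonneg_right (T.norm_G hκ hχ p hp (T.mem_P.1 hv').2) hw.le
  rw [emb, emb, T.sum_sub_sum, rho_eq, mul_add]
  exact (norm_sub_le _ _).trans (add_le_add (key x y) (key y x))

end Emb

end RootedWTree

namespace RootedWTree

section Lower

variable {V C : Type*} (T : RootedWTree V)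

lemma small_sum (χ : V → C) (c' : C) (τ : ℝ) (hτ : 0 ≤ τ) (x : V) :
    ∑ v ∈ (T.A χ c' x).filter (fun v => T.d χ (χ v) v < τ), T.w v ≤ τ := by
  set S := (T.A χ c' x).filter (fun v => T.d χ (χ v) v < τ) with hS
  rcases S.eq_empty_or_nonempty with h | h
  · rw [h, Finset.sum_empty]
    exact hτ
  obtain ⟨m, hm, hmax⟩ := S.exists_max_image (fun v => (T.P v).card) h
  have hm1 := T.mem_A.1 (Finset.mem_filter.1 hm).1
  have hm2 := (Finset.mem_filter.1 hm).2
  refine le_trans ?_ hm2.le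
  refine T.sum_mono ?_ (T.A_sub_P _ _ _)
  intro u hu
  have hu1 := T.mem_A.1 (Finset.mem_filter.1 hu).1
  refine T.mem_A.2 ⟨?_, by rw [hu1.2, hm1.2]⟩
  rcases T.P_comp hu1.1 hm1.1 with h1 | h1
  · exact h1
  · have hsub : T.P m ⊆ T.P u := fun a ha => T.P_trans ha h1
    rw [Finset.eq_of_subset_of_card_le hsub (hmax u hu)]
    exact T.self_mem' hu1.1

lemma bad_sum {χ : V → C} {κ : ℕ} (hκ : 1 ≤ κ) (hχ : T.IsCaterpillar χ κ) (l : ℝ) (hl : 0 ≤ l)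
    (x : V) :
    ∑ v ∈ (T.P x).filter (fun v => ¬ l ≤ 2 * κ * T.d χ (χ v) v), T.w v ≤ l / 2 := by
  have hκ' : (0 : ℝ) < κ := by exact_mod_cast hκ
  rw [← Finset.sum_fiberwise_of_maps_to (t := (T.P x).image χ) (g := χ)
    (fun u hu => Finset.mem_image_of_mem χ (Finset.mem_filter.1 hu).1)]
  calc _ ≤ ∑ c ∈ (T.P x).image χ, l / (2 * κ) := by
        refine Finset.sum_le_sum (fun c _ => ?_)
        refine le_trans ?_ (T.small_sum χ c (l / (2 * κ)) (by positivity) x)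
        refine T.sum_mono ?_ ((Finset.filter_subset _ _).trans (T.A_sub_P _ _ _))
        intro u hu
        obtain ⟨hu1, hu2⟩ := Finset.mem_filter.1 hu
        obtain ⟨hu3, hu4⟩ := Finset.mem_filter.1 hu1
        refine Finset.mem_filter.2 ⟨T.mem_A.2 ⟨hu3, hu2⟩, ?_⟩
        rw [lt_div_iff₀ (by positivity)]
        linarith [not_le.1 hu4]
    _ = ((T.P x).image χ).card * (l / (2 * κ)) := by rw [Finset.sum_const, nsmul_eq_mul]
    _ ≤ κ * (l / (2 * κ)) := by
        have : (((T.P x).image χ).card : ℝ) ≤ κ := by exact_mod_cast T.card_colors hχ x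
        gcongr
    _ = l / 2 := by field_simp

lemma ratio_mono {χ : V → C} (hm : T.IsMonotoneColoring χ) {c : C} {v x : V}
    (hv : v ∈ T.B χ c x) :
    T.d χ c x / T.D χ c x ≤ T.d χ c v / T.D χ c v := by
  obtain ⟨hvx, t, ht, htc⟩ := T.mem_B.1 hv
  by_cases hc : χ v = c
  · subst hc
    rw [T.ratio_self hm (T.mem_P.1 hvx).2]
    exact T.ratio_le_one _ _ _
  · have hd : T.d χ c x = T.d χ c v := by
      rw [d, d]
      congr 1
      ext u
      rw [mem_A, mem_A]
      constructor
      · rintro ⟨h1, h2⟩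
        refine ⟨?_, h2⟩
        rcases T.P_comp h1 hvx with h | h
        · exact h
        · exact absurd (T.mono_conv hm ht h h1 htc h2) hc
      · rintro ⟨h1, h2⟩
        exact ⟨T.P_trans h1 hvx, h2⟩
    rw [hd]
    have hpos : 0 < T.D χ c v := (T.d_pos ht htc).trans_le (T.d_le_D _ _ _)
    refine div_le_div_of_nonneg_left (T.d_nonneg _ _ _) hpos ?_
    refine T.sum_mono ?_ (T.B_sub_P _ _ _)
    intro u hu
    rw [mem_B] at hu ⊢
    exact ⟨T.P_trans hu.1 hvx, hu.2⟩

lemma coord_lower {χ : V → C} {κ : ℕ} (hκ : 1 ≤ κ) (hχ : T.IsCaterpillar χ κ) (p : ℝ)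
    (hp : 1 < p) (x : V) (c : C) :
    (T.d χ c x / T.D χ c x) ^ (1 / p) * (T.D χ c x / 2) ≤
      ∑ v ∈ T.P x, T.w v * T.g χ κ p v c := by
  set l := T.d χ c x with hl
  set L := T.D χ c x with hL
  have hl0 : 0 ≤ l := T.d_nonneg _ _ _
  have hlL : l ≤ L := T.d_le_D _ _ _
  have hbad := T.bad_sum hκ hχ l hl0 x
  set q := (l / L) ^ (1 / p) with hq
  have hq0 : 0 ≤ q := Real.rpow_nonneg (T.ratio_nonneg _ _ _) _
  have hsplit := Finset.sum_filter_add_sum_filter_not (T.B χ c x)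
    (fun v => l ≤ 2 * κ * T.d χ (χ v) v) T.w
  have hb2 : ∑ v ∈ (T.B χ c x).filter (fun v => ¬ l ≤ 2 * κ * T.d χ (χ v) v), T.w v ≤ l / 2 :=
    le_trans (T.sum_mono (Finset.filter_subset_filter _ (T.B_sub_P _ _ _))
      (Finset.filter_subset _ _)) hbad
  have hgood : L / 2 ≤ ∑ v ∈ (T.B χ c x).filter (fun v => l ≤ 2 * κ * T.d χ (χ v) v), T.w v := by
    have : L = ∑ v ∈ T.B χ c x, T.w v := rfl
    linarith
  calc q * (L / 2) ≤ q * ∑ v ∈ (T.B χ c x).filter (fun v => l ≤ 2 * κ * T.d χ (χ v) v), T.w v :=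
        mul_le_mul_of_nonneg_left hgood hq0
    _ = ∑ v ∈ (T.B χ c x).filter (fun v => l ≤ 2 * κ * T.d χ (χ v) v), T.w v * q := by
        rw [mul_comm, Finset.sum_mul]
    _ ≤ ∑ v ∈ (T.B χ c x).filter (fun v => l ≤ 2 * κ * T.d χ (χ v) v),
          T.w v * T.g χ κ p v c := by
        refine Finset.sum_le_sum (fun v hv => ?_)
        obtain ⟨hv1, hv2⟩ := Finset.mem_filter.1 hv
        have hvP := T.B_sub_P _ _ _ hv1
        refine mul_le_mul_of_nonneg_left ?_ (T.w_pos_of_mem hvP).le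
        have hdle : T.d χ c v ≤ l := by
          refine T.sum_mono ?_ (T.A_sub_P _ _ _)
          intro u hu
          rw [mem_A] at hu ⊢
          exact ⟨T.P_trans hu.1 hvP, hu.2⟩
        unfold g
        rw [if_pos (hdle.trans hv2)]
        exact Real.rpow_le_rpow (T.ratio_nonneg _ _ _) (T.ratio_mono hχ.1 hv1) (by positivity)
    _ ≤ ∑ v ∈ T.P x, T.w v * T.g χ κ p v c := by
        refine Finset.sum_le_sum_of_subset_of_nonneg
          ((Finset.filter_subset _ _).trans (T.B_sub_P _ _ _)) ?_
        intro v hv _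
        exact mul_nonneg (T.w_pos_of_mem hv).le (T.g_nonneg _ _ _ _ _)

/-- Edges of `x` off `y` with a colour not used on the common part. -/
def U (χ : V → C) (x y : V) : Finset V :=
  (T.P x \ T.P y).filter (fun v => ∀ u ∈ T.P x ∩ T.P y, χ u ≠ χ v)

lemma new_bound {χ : V → C} {κ : ℕ} (hκ : 1 ≤ κ) (hχ : T.IsCaterpillar χ κ) (p : ℝ)
    (hp : 1 < p) (x y : V) :
    ∑ v ∈ T.U χ x y, T.w v ≤ 4 * ‖T.emb χ κ p hp x - T.emb χ κ p hp y‖ := by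
  have hfact : Fact (1 ≤ ENNReal.ofReal p) := fact_one_le hp
  have hp0 : 0 < p := by linarith
  have htr : (ENNReal.ofReal p).toReal = p := ENNReal.toReal_ofReal hp0.le
  have hU : T.U χ x y ⊆ T.P x := (Finset.filter_subset _ _).trans Finset.sdiff_subset
  set r := ∑ v ∈ T.U χ x y, T.w v with hr
  have hr0 : 0 ≤ r := Finset.sum_nonneg (fun v hv => (T.w_pos_of_mem (hU hv)).le)
  rcases hr0.eq_or_lt with h0 | h0
  · rw [← h0]
    have := norm_nonneg (T.emb χ κ p hp x - T.emb χ κ p hp y)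
    linarith
  set N := (T.U χ x y).image χ with hN
  have hNP : N ⊆ (T.P x).image χ := Finset.image_subset_image hU
  have hr1 : r ≤ ∑ c ∈ N, T.d χ c x := by
    rw [sum_d_eq]
    refine T.sum_mono ?_ (Finset.filter_subset _ _)
    intro v hv
    exact Finset.mem_filter.2 ⟨hU hv, Finset.mem_image_of_mem χ hv⟩
  set N' := N.filter (fun c => r / 2 ≤ T.D χ c x) with hN'
  have hsplit := Finset.sum_filter_add_sum_filter_not N (fun c => r / 2 ≤ T.D χ c x)
    (fun c => T.d χ c x)
  have hsmall : ∑ c ∈ N.filter (fun c => ¬ r / 2 ≤ T.D χ c x), T.d χ c x ≤ r / 2 := by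
    rcases (N.filter (fun c => ¬ r / 2 ≤ T.D χ c x)).eq_empty_or_nonempty with h | h
    · rw [h, Finset.sum_empty]
      linarith
    · obtain ⟨m, hm, hmax⟩ := Finset.exists_max_image _ (fun c => T.D χ c x) h
      obtain ⟨hm1, hm2⟩ := Finset.mem_filter.1 hm
      exact (T.sum_d_le_D (hNP hm1) hmax).trans (not_le.1 hm2).le
  have hbig : r / 2 ≤ ∑ c ∈ N', T.d χ c x := by linarith
  have hcoord : ∀ c ∈ N, (T.emb χ κ p hp x - T.emb χ κ p hp y) c =
      ∑ v ∈ T.P x, T.w v * T.g χ κ p v c := by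
    intro c hc
    obtain ⟨v, hv, rfl⟩ := Finset.mem_image.1 hc
    obtain ⟨hv1, hv2⟩ := Finset.mem_filter.1 hv
    obtain ⟨hv3, hv4⟩ := Finset.mem_sdiff.1 hv1
    have hno : ∀ u ∈ T.P y, χ u ≠ χ v := by
      intro u hu huv
      rcases T.mono_comp hχ.1 hu hv3 huv with h | h
      · exact hv2 u (Finset.mem_inter.2 ⟨T.P_trans h hv3, hu⟩) huv
      · exact hv4 (T.P_trans h hu)
    rw [lp.coeFn_sub, Pi.sub_apply, emb_apply, emb_apply]
    rw [Finset.sum_eq_zero (s := T.P y), sub_zero]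
    intro u hu
    rw [T.g_zero hp (fun t ht => hno t (T.P_trans ht hu)), mul_zero]
  have hsum := lp.sum_rpow_le_norm_rpow (by rw [htr]; exact hp0)
    (T.emb χ κ p hp x - T.emb χ κ p hp y) N'
  rw [htr] at hsum
  have hterm : ∀ c ∈ N', T.d χ c x * ((r / 2) ^ (p - 1) * (1 / 2) ^ p) ≤
      ‖(T.emb χ κ p hp x - T.emb χ κ p hp y) c‖ ^ p := by
    intro c hc
    obtain ⟨hc1, hc2⟩ := Finset.mem_filter.1 hc
    rw [hcoord c hc1]
    have hlow := T.coord_lower hκ hχ p hp x c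
    have hL : 0 < T.D χ c x := by linarith
    have hd0 := T.d_nonneg χ c x
    have hq := T.ratio_nonneg χ c x
    calc T.d χ c x * ((r / 2) ^ (p - 1) * (1 / 2) ^ p)
        ≤ T.d χ c x * ((T.D χ c x) ^ (p - 1) * (1 / 2) ^ p) := by
          have : (r / 2) ^ (p - 1) ≤ (T.D χ c x) ^ (p - 1) :=
            Real.rpow_le_rpow (by linarith) hc2 (by linarith)
          gcongr
      _ = ((T.d χ c x / T.D χ c x) ^ (1 / p) * (T.D χ c x / 2)) ^ p := by
          rw [Real.mul_rpow (Real.rpow_nonneg hq _) (by linarith), ← Real.rpow_mul hq,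
            one_div_mul_cancel hp0.ne', Real.rpow_one, div_eq_mul_inv (T.D χ c x) 2,
            Real.mul_rpow hL.le (by norm_num), Real.rpow_sub_one hL.ne', one_div]
          field_simp
      _ ≤ _ := by
          refine Real.rpow_le_rpow ?_ (hlow.trans (Real.le_norm_self _)) hp0.le
          exact mul_nonneg (Real.rpow_nonneg hq _) (by linarith)
  have h3 : (r / 4) ^ p ≤ ‖T.emb χ κ p hp x - T.emb χ κ p hp y‖ ^ p := by
    refine le_trans ?_ ((Finset.sum_le_sum hterm).trans hsum)
    rw [← Finset.sum_mul]
    calc (r / 4) ^ p = (r / 2) * ((r / 2) ^ (p - 1) * (1 / 2) ^ p) := by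
          rw [show r / 4 = (r / 2) * (1 / 2) by ring, Real.mul_rpow (by linarith) (by norm_num),
            Real.rpow_sub_one (by linarith)]
          field_simp
      _ ≤ _ := by
          refine mul_le_mul_of_nonneg_right hbig ?_
          have : 0 < r / 2 := by linarith
          positivity
  have h4 := (Real.rpow_le_rpow_iff (x := r / 4) (by linarith) (norm_nonneg _) hp0).1 h3
  linarith

lemma old_unique {χ : V → C} (hm : T.IsMonotoneColoring χ) {x y u u' v v' a b : V}
    (hu : u ∈ T.P x ∩ T.P y) (hu' : u' ∈ T.P x ∩ T.P y) (ha : a = x ∧ b = y ∨ a = y ∧ b = x)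
    (hv : v ∈ T.P x \ T.P y) (hv' : v' ∈ T.P a \ T.P b) (h : χ u = χ v) (h' : χ u' = χ v') :
    χ v = χ v' := by
  rw [Finset.mem_inter] at hu hu'
  rw [Finset.mem_sdiff] at hv hv'
  have hu'v : u' ∈ T.P v := by
    rcases T.P_comp hu'.1 hv.1 with h1 | h1
    · exact h1
    · exact absurd (T.P_trans h1 hu'.2) hv.2
  have huab : u ∈ T.P a ∧ u ∈ T.P b := by
    rcases ha with ⟨rfl, rfl⟩ | ⟨rfl, rfl⟩
    · exact hu
    · exact hu.symm
  have huv' : u ∈ T.P v' := by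
    rcases T.P_comp huab.1 hv'.1 with h1 | h1
    · exact h1
    · exact absurd (T.P_trans h1 huab.2) hv'.2
  rcases T.P_comp hu.1 hu'.1 with h1 | h1
  · rw [← h', T.mono_conv hm h1 hu'v hv.1 h rfl]
  · rw [← h, T.mono_conv hm h1 huv' hv'.1 h' rfl]

lemma lower_case {χ : V → C} {κ : ℕ} (hκ : 1 ≤ κ) (hχ : T.IsCaterpillar χ κ) (p : ℝ)
    (hp : 1 < p) (x y : V) (hne : T.U χ x y ≠ T.P x \ T.P y) :
    T.rho x y ≤ 96 * ‖T.emb χ κ p hp x - T.emb χ κ p hp y‖ := by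
  have hfact : Fact (1 ≤ ENNReal.ofReal p) := fact_one_le hp
  have hp0 : 0 < p := by linarith
  obtain ⟨v, hv, hvU⟩ : ∃ v ∈ T.P x \ T.P y, v ∉ T.U χ x y := by
    by_contra hcon
    push Not at hcon
    exact hne (Finset.Subset.antisymm (Finset.filter_subset _ _) hcon)
  obtain ⟨u, hu, huv⟩ : ∃ u ∈ T.P x ∩ T.P y, χ u = χ v := by
    by_contra hcon
    push Not at hcon
    exact hvU (Finset.mem_filter.2 ⟨hv, hcon⟩)
  have hUy : T.U χ y x = T.P y \ T.P x := by
    refine Finset.Subset.antisymm (Finset.filter_subset _ _) ?_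
    intro v' hv'
    refine Finset.mem_filter.2 ⟨hv', ?_⟩
    intro u' hu' huv'
    rw [Finset.inter_comm] at hu'
    have hcc := T.old_unique hχ.1 hu hu' (Or.inr ⟨rfl, rfl⟩) hv hv' huv huv'
    rw [Finset.mem_sdiff] at hv hv'
    rcases T.mono_comp hχ.1 hv.1 hv'.1 hcc with h | h
    · exact hv.2 (T.P_trans h hv'.1)
    · exact hv'.2 (T.P_trans h hv.1)
  have hold : ∀ v' ∈ T.P x \ T.P y, v' ∉ T.U χ x y → χ v' = χ v := by
    intro v' hv' hvU'
    obtain ⟨u', hu', huv'⟩ : ∃ u ∈ T.P x ∩ T.P y, χ u = χ v' := by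
      by_contra hcon
      push Not at hcon
      exact hvU' (Finset.mem_filter.2 ⟨hv', hcon⟩)
    exact (T.old_unique hχ.1 hu hu' (Or.inl ⟨rfl, rfl⟩) hv hv' huv huv').symm
  have hx := T.new_bound hκ hχ p hp x y
  have hy := T.new_bound hκ hχ p hp y x
  rw [hUy, norm_sub_rev] at hy
  set n := ‖T.emb χ κ p hp x - T.emb χ κ p hp y‖ with hn
  have hn0 : 0 ≤ n := norm_nonneg _
  set c := χ v with hc
  have hcoord : ‖(T.emb χ κ p hp x - T.emb χ κ p hp y) c‖ ≤ n :=
    lp.norm_apply_le_norm (by simpa using hp0) _ _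
  rw [lp.coeFn_sub, Pi.sub_apply, emb_apply, emb_apply,
    T.sum_sub_sum (fun v => T.w v * T.g χ κ p v c)] at hcoord
  have h1 := (Real.le_norm_self _).trans hcoord
  have h2 : ∑ v ∈ T.P y \ T.P x, T.w v * T.g χ κ p v c ≤ ∑ v ∈ T.P y \ T.P x, T.w v := by
    refine Finset.sum_le_sum (fun a ha => ?_)
    exact mul_le_of_le_one_right (T.w_pos_of_mem (Finset.mem_sdiff.1 ha).1).le
      (T.g_le_one χ κ p hp a c)
  have h3 : ∑ a ∈ (T.P x \ T.P y) \ T.U χ x y, T.w a ≤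
      ∑ v ∈ T.P x \ T.P y, T.w v * T.g χ κ p v c := by
    calc _ = ∑ a ∈ (T.P x \ T.P y) \ T.U χ x y, T.w a * T.g χ κ p a c := by
          refine Finset.sum_congr rfl (fun a ha => ?_)
          obtain ⟨ha1, ha2⟩ := Finset.mem_sdiff.1 ha
          rw [← hold a ha1 ha2,
            T.g_self hχ.1 hκ p (T.mem_P.1 (Finset.mem_sdiff.1 ha1).1).2, mul_one]
      _ ≤ _ := by
          refine Finset.sum_le_sum_of_subset_of_nonneg Finset.sdiff_subset ?_
          intro a ha _
          exact mul_nonneg (T.w_pos_of_mem (Finset.mem_sdiff.1 ha).1).le (T.g_nonneg _ _ _ _ _)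
  have h4 : ∑ a ∈ (T.P x \ T.P y) \ T.U χ x y, T.w a + ∑ a ∈ T.U χ x y, T.w a =
      ∑ a ∈ T.P x \ T.P y, T.w a := Finset.sum_sdiff (Finset.filter_subset _ _)
  rw [rho_eq]
  linarith

lemma rho_comm (x y : V) : T.rho x y = T.rho y x := by
  rw [rho, rho, add_comm]

lemma emb_lower {χ : V → C} {κ : ℕ} (hκ : 1 ≤ κ) (hχ : T.IsCaterpillar χ κ) (p : ℝ)
    (hp : 1 < p) (x y : V) :
    T.rho x y ≤ 96 * ‖T.emb χ κ p hp x - T.emb χ κ p hp y‖ := by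
  have hfact : Fact (1 ≤ ENNReal.ofReal p) := fact_one_le hp
  by_cases h1 : T.U χ x y = T.P x \ T.P y
  · by_cases h2 : T.U χ y x = T.P y \ T.P x
    · have hx := T.new_bound hκ hχ p hp x y
      have hy := T.new_bound hκ hχ p hp y x
      rw [norm_sub_rev] at hy
      rw [h1] at hx
      rw [h2] at hy
      rw [rho_eq]
      linarith [norm_nonneg (T.emb χ κ p hp x - T.emb χ κ p hp y)]
    · rw [rho_comm, norm_sub_rev]
      exact T.lower_case hκ hχ p hp y x h2
  · exact T.lower_case hκ hχ p hp x y h1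

lemma rho_le_zero {x y : V} (h : T.rho x y ≤ 0) : x = y := by
  have key : ∀ a b : V, ∀ v ∈ T.P a \ T.P b, 0 < T.w v :=
    fun a b v hv => T.w_pos_of_mem (Finset.mem_sdiff.1 hv).1
  rw [rho_eq] at h
  have h1 : 0 ≤ ∑ v ∈ T.P x \ T.P y, T.w v := Finset.sum_nonneg (fun v hv => (key x y v hv).le)
  have h2 : 0 ≤ ∑ v ∈ T.P y \ T.P x, T.w v := Finset.sum_nonneg (fun v hv => (key y x v hv).le)
  apply T.P_eq
  · by_contra hne
    have := Finset.sum_pos (key x y) (Finset.nonempty_iff_ne_empty.2 hne)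
    linarith
  · by_contra hne
    have := Finset.sum_pos (key y x) (Finset.nonempty_iff_ne_empty.2 hne)
    linarith

end Lower

end RootedWTree

/-- Theorem 3.4: a weighted rooted tree admitting a `κ`-caterpillar
coloring with colors in `C` embeds into `ℓ^p(C)` by a map `f` with
`‖f x - f y‖ ≤ (6 ln (2κ))^{1/p} ρ(x,y)` and `ρ(x,y) ≤ 96 ‖f x - f y‖`;
in particular `c_{ℓ^p(C)}(T) ≤ 96 (6 ln (2κ))^{1/p}`. -/
theorem caterpillar_embedding
    {V C : Type*} (T : RootedWTree V) (p : ℝ) (hp : 1 < p)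
    (κ : ℕ) (hκ : 1 ≤ κ) (χ : V → C) (hχ : T.IsCaterpillar χ κ) :
    ∃ f : V → lp (fun _ : C => ℝ) (ENNReal.ofReal p),
      (∀ x y : V,
        ‖f x - f y‖ ≤ (6 * Real.log (2 * κ)) ^ (1 / p) * T.rho x y ∧
        T.rho x y ≤ 96 * ‖f x - f y‖) ∧
      cDist V (lp (fun _ : C => ℝ) (ENNReal.ofReal p)) T.rho
          (fun a b => ‖a - b‖) ≤
        ENNReal.ofReal (96 * (6 * Real.log (2 * κ)) ^ (1 / p)) := by
  have hfact : Fact (1 ≤ ENNReal.ofReal p) := RootedWTree.fact_one_le hp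
  have hlow := T.emb_lower hκ hχ p hp
  have hlip := T.emb_lip hκ hχ p hp
  refine ⟨T.emb χ κ p hp, fun x y => ⟨hlip x y, hlow x y⟩, ?_⟩
  refine iInf₂_le_of_le ((6 * Real.log (2 * κ)) ^ (1 / p) * 96) ?_ ?_
  · refine ⟨T.emb χ κ p hp, ?_, _, _, hlip, hlow, rfl⟩
    intro x y hxy
    apply T.rho_le_zero
    have h := hlow x y
    rw [hxy, sub_self, norm_zero, mul_zero] at h
    exact h
  · rw [mul_comm]

end
end
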